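/- arXiv:1408.1703 — 3 statements merged into one kernel-verified Lean document; each statement's English description precedes it below -/
import Mathlib

section
/- Every signed eulerian graph that admits a nowhere-zero integer flow admits a nowhere-zero 4-flow. -/
open Finset

/-- A signed multigraph on vertex type `V` with edge type `E`: each edge `e`
consists of two half-edges indexed by `Bool`; `ends e i` is the end-vertex at
which the half-edge `(e, i)` is attached (loops and multiple edges are
allowed), and `sign e ∈ {1, -1}` is the sign of the edge `e`. -/
structure SignedGraph (V E : Type) where
  ends : E → Bool → V
  sign : E → ℤˣ

namespace SignedGraph

variable {V E : Type} [Fintype V] [Fintype E] [DecidableEq V] [DecidableEq E]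

/-- The valency of `v` in the subgraph spanned by the edge set `S`:
the number of half-edges of edges of `S` attached at `v` (a loop at `v`
contributes `2`). -/
def valencyOn (G : SignedGraph V E) (S : Finset E) (v : V) : ℕ :=
  (univ.filter fun p : E × Bool => p.1 ∈ S ∧ G.ends p.1 p.2 = v).card

/-- The valency of a vertex in `G`. -/
def valency (G : SignedGraph V E) (v : V) : ℕ :=
  G.valencyOn univ v

/-- The set of vertices incident with some edge of `S`. -/
def suppV (G : SignedGraph V E) (S : Finset E) : Finset V :=
  univ.filter fun v => ∃ e ∈ S, ∃ i : Bool, G.ends e i = v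

/-- `u` and `v` are joined by an edge of `S`. -/
def AdjOn (G : SignedGraph V E) (S : Finset E) (u v : V) : Prop :=
  ∃ e ∈ S, ∃ i : Bool, G.ends e i = u ∧ G.ends e (!i) = v

/-- The subgraph spanned by the edge set `S` is connected: any two vertices
incident with edges of `S` are joined by a walk using edges of `S`. -/
def ConnOn (G : SignedGraph V E) (S : Finset E) : Prop :=
  ∀ u ∈ G.suppV S, ∀ v ∈ G.suppV S, Relation.ReflTransGen (G.AdjOn S) u v

/-- `G` is connected (as a graph on the whole vertex set `V`). -/
def Connected (G : SignedGraph V E) : Prop :=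
  Nonempty V ∧ ∀ u v : V, Relation.ReflTransGen (G.AdjOn univ) u v

/-- The edge set `S` spans a circuit: a nonempty connected `2`-regular
subgraph. -/
def IsCircuit (G : SignedGraph V E) (S : Finset E) : Prop :=
  S.Nonempty ∧ G.ConnOn S ∧ ∀ v ∈ G.suppV S, G.valencyOn S v = 2

/-- The sign of a set of edges: the product of the signs of its edges. -/
def signOf (G : SignedGraph V E) (S : Finset E) : ℤˣ :=
  ∏ e ∈ S, G.sign e

/-- The negative edges among `S`. -/
def negEdges (G : SignedGraph V E) (S : Finset E) : Finset E :=
  S.filter fun e => G.sign e = -1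

/-- A balanced circuit: a circuit of sign `+1`. -/
def IsBalancedCircuit (G : SignedGraph V E) (S : Finset E) : Prop :=
  G.IsCircuit S ∧ G.signOf S = 1

/-- An unbalanced circuit: a circuit of sign `-1`. -/
def IsUnbalancedCircuit (G : SignedGraph V E) (S : Finset E) : Prop :=
  G.IsCircuit S ∧ G.signOf S = -1

/-- `G` is balanced: it contains no unbalanced circuit. -/
def Balanced (G : SignedGraph V E) : Prop :=
  ∀ S : Finset E, G.IsCircuit S → G.signOf S = 1

/-- `G` is tightly unbalanced: it is unbalanced, but for some edge `f` the
graph `G - f` is balanced. -/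
def TightlyUnbalanced (G : SignedGraph V E) : Prop :=
  ¬ G.Balanced ∧ ∃ f : E, ∀ S : Finset E, G.IsCircuit S → f ∉ S → G.signOf S = 1

/-- `G` is eulerian: connected with all valencies even. -/
def Eulerian (G : SignedGraph V E) : Prop :=
  G.Connected ∧ ∀ v : V, Even (G.valency v)

/-- The edge set `S` spans an eulerian subgraph of `G`. -/
def EulerianOn (G : SignedGraph V E) (S : Finset E) : Prop :=
  S.Nonempty ∧ G.ConnOn S ∧ ∀ v : V, Even (G.valencyOn S v)

/-- An orientation (bidirection) of `G`: `dir e i = true` means that the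
half-edge `(e, i)` is directed towards its end-vertex, `dir e i = false` that
it is directed away from it.  Compatibility: a positive edge becomes an
ordinary directed edge (one half-edge in, one out) and a negative edge becomes
a broken (extroverted or introverted) edge. -/
structure Orientation (G : SignedGraph V E) where
  dir : E → Bool → Bool
  compat : ∀ e : E, G.sign e = 1 ↔ dir e false ≠ dir e true

/-- `φ` is a flow on `G` with respect to the orientation `O`: at every vertex
`v`, the sum of values on half-edges directed into `v` equals the sum of
values on half-edges directed out of `v` (Kirchhoff's law). -/
def IsFlow {A : Type} [AddCommGroup A] (G : SignedGraph V E)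
    (O : G.Orientation) (φ : E → A) : Prop :=
  ∀ v : V,
    ∑ p ∈ univ.filter (fun p : E × Bool => G.ends p.1 p.2 = v),
      (if O.dir p.1 p.2 then φ p.1 else -φ p.1) = 0

/-- `G` admits a nowhere-zero `A`-flow. -/
def HasNZFlow (G : SignedGraph V E) (A : Type) [AddCommGroup A] : Prop :=
  ∃ (O : G.Orientation) (φ : E → A), G.IsFlow O φ ∧ ∀ e : E, φ e ≠ 0

/-- `G` is flow-admissible: it admits a nowhere-zero integer flow. -/
def FlowAdmissible (G : SignedGraph V E) : Prop :=
  ∃ (O : G.Orientation) (φ : E → ℤ), G.IsFlow O φ ∧ ∀ e : E, φ e ≠ 0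

/-- `G` admits a nowhere-zero `k`-flow: an integer flow with all values in
`{±1, …, ±(k-1)}`. -/
def HasNZkFlow (G : SignedGraph V E) (k : ℕ) : Prop :=
  ∃ (O : G.Orientation) (φ : E → ℤ), G.IsFlow O φ ∧
    ∀ e : E, φ e ≠ 0 ∧ |φ e| < (k : ℤ)

/-- `G` is triply odd: it can be decomposed into three edge-disjoint eulerian
subgraphs, each with an odd number of negative edges, sharing a common
vertex. -/
def TriplyOdd (G : SignedGraph V E) : Prop :=
  ∃ S₁ S₂ S₃ : Finset E,
    Disjoint S₁ S₂ ∧ Disjoint S₁ S₃ ∧ Disjoint S₂ S₃ ∧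
    S₁ ∪ S₂ ∪ S₃ = univ ∧
    G.EulerianOn S₁ ∧ G.EulerianOn S₂ ∧ G.EulerianOn S₃ ∧
    Odd (G.negEdges S₁).card ∧ Odd (G.negEdges S₂).card ∧
    Odd (G.negEdges S₃).card ∧
    ∃ v : V, v ∈ G.suppV S₁ ∧ v ∈ G.suppV S₂ ∧ v ∈ G.suppV S₃

/-- The edge set `P` spans a (nontrivial) path from `u` to `v`: a connected
subgraph in which `u` and `v` have valency `1` and all other vertices have
valency `2`. -/
def IsPathOn (G : SignedGraph V E) (P : Finset E) (u v : V) : Prop :=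
  u ≠ v ∧ G.ConnOn P ∧ u ∈ G.suppV P ∧ v ∈ G.suppV P ∧
  G.valencyOn P u = 1 ∧ G.valencyOn P v = 1 ∧
  ∀ w ∈ G.suppV P, w ≠ u → w ≠ v → G.valencyOn P w = 2

/-- `T` spans a signed circuit of type (2): the union of two unbalanced
circuits meeting at a single vertex. -/
def IsType2 (G : SignedGraph V E) (T : Finset E) : Prop :=
  ∃ (S₁ S₂ : Finset E) (v : V),
    G.IsUnbalancedCircuit S₁ ∧ G.IsUnbalancedCircuit S₂ ∧ Disjoint S₁ S₂ ∧
    G.suppV S₁ ∩ G.suppV S₂ = {v} ∧ S₁ ∪ S₂ = T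

/-- `T` spans a signed circuit of type (3): the union of two vertex-disjoint
unbalanced circuits together with a path meeting the circuits only at its
ends. -/
def IsType3 (G : SignedGraph V E) (T : Finset E) : Prop :=
  ∃ (S₁ S₂ P : Finset E) (u v : V),
    G.IsUnbalancedCircuit S₁ ∧ G.IsUnbalancedCircuit S₂ ∧
    Disjoint (G.suppV S₁) (G.suppV S₂) ∧
    G.IsPathOn P u v ∧ u ∈ G.suppV S₁ ∧ v ∈ G.suppV S₂ ∧
    G.suppV P ∩ G.suppV S₁ = {u} ∧ G.suppV P ∩ G.suppV S₂ = {v} ∧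
    Disjoint P (S₁ ∪ S₂) ∧ S₁ ∪ S₂ ∪ P = T

/-- `T` spans a signed circuit: a balanced circuit, or a signed circuit of
type (2) or (3). -/
def IsSignedCircuit (G : SignedGraph V E) (T : Finset E) : Prop :=
  G.IsBalancedCircuit T ∨ G.IsType2 T ∨ G.IsType3 T

/-- `T` spans a weak unbalanced bicircuit: two edge-disjoint unbalanced
circuits (not necessarily vertex-disjoint) joined by a possibly trivial path
having no edge in the two circuits. -/
def IsWeakBicircuit (G : SignedGraph V E) (T : Finset E) : Prop :=
  ∃ C₁ C₂ : Finset E,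
    G.IsUnbalancedCircuit C₁ ∧ G.IsUnbalancedCircuit C₂ ∧ Disjoint C₁ C₂ ∧
    (((∃ v : V, v ∈ G.suppV C₁ ∧ v ∈ G.suppV C₂) ∧ T = C₁ ∪ C₂) ∨
      ∃ (P : Finset E) (u v : V),
        G.IsPathOn P u v ∧ u ∈ G.suppV C₁ ∧ v ∈ G.suppV C₂ ∧
        Disjoint P (C₁ ∪ C₂) ∧ T = C₁ ∪ C₂ ∪ P)

/-- Every connected component of `G - f` contains an unbalanced circuit,
i.e. `G - f` has no balanced component. -/
def NoBalancedComponentAvoiding (G : SignedGraph V E) (f : E) : Prop :=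
  ∀ u : V, ∃ S : Finset E,
    G.IsCircuit S ∧ G.signOf S = -1 ∧ f ∉ S ∧
    ∀ w ∈ G.suppV S, Relation.ReflTransGen (G.AdjOn (univ.erase f)) w u

/-- `G` is 2-edge-connected: connected, and still connected after removing
any single edge. -/
def TwoEdgeConnected (G : SignedGraph V E) : Prop :=
  G.Connected ∧ ∀ f : E, ∀ u v : V,
    Relation.ReflTransGen (G.AdjOn (univ.erase f)) u v

/-- `G` is antibalanced: replacing its signature `σ` by `-σ` makes it
balanced. -/
def Antibalanced (G : SignedGraph V E) : Prop :=
  ∀ S : Finset E, G.IsCircuit S → (∏ e ∈ S, (-G.sign e)) = 1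

end SignedGraph

namespace EulFlow

set_option linter.unusedSectionVars false

variable {V E : Type} [DecidableEq E] [DecidableEq V]

/-- Trails (no repeated edge) with edge set `S` from `u` to `v`; traversing the edge `e`
from its half-edge `i` requires `Q e i`. -/
inductive Tr (n : E → Bool → V) (Q : E → Bool → Prop) : Finset E → V → V → Prop
  | nil (u : V) : Tr n Q ∅ u u
  | cons {S : Finset E} {e : E} {i : Bool} {v : V} :
      Q e i → e ∉ S → Tr n Q S (n e (!i)) v → Tr n Q (insert e S) (n e i) v

/-- `z` is an end of an edge of `S`. -/
def Touch (n : E → Bool → V) (S : Finset E) (z : V) : Prop := ∃ e ∈ S, ∃ i, n e i = z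

/-- All valencies of `A` are even (in multiplicative form). -/
def EV (n : E → Bool → V) (A : Finset E) : Prop :=
  ∀ s : V → ℤˣ, ∏ e ∈ A, (s (n e false) * s (n e true)) = 1

variable {n : E → Bool → V} {Q : E → Bool → Prop}

theorem Touch.mono {S T : Finset E} {z : V} (h : Touch n S z) (hST : S ⊆ T) : Touch n T z := by
  obtain ⟨e, he, i, hi⟩ := h
  exact ⟨e, hST he, i, hi⟩

theorem Tr.append {S T : Finset E} {u w v : V} (h : Tr n Q S u w) (h' : Tr n Q T w v)
    (hd : Disjoint S T) : Tr n Q (S ∪ T) u v := by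
  induction h with
  | nil u => simpa using h'
  | @cons S e i w hq he _ ih =>
    rw [Finset.disjoint_insert_left] at hd
    rw [Finset.insert_union]
    refine Tr.cons hq ?_ (ih h' hd.2)
    simp [he, hd.1]

theorem Tr.single {e : E} {i : Bool} (hq : Q e i) : Tr n Q {e} (n e i) (n e (!i)) := by
  have := Tr.cons (n := n) (Q := Q) (S := ∅) hq (by simp) (Tr.nil _)
  simpa using this

theorem Tr.snoc {S : Finset E} {u : V} {e : E} {i : Bool} (h : Tr n Q S u (n e i)) (hq : Q e i)
    (he : e ∉ S) : Tr n Q (insert e S) u (n e (!i)) := by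
  have := h.append (Tr.single (n := n) hq) (by simpa using he)
  rwa [Finset.union_comm, ← Finset.insert_eq] at this

theorem Tr.split {S : Finset E} {u v z : V} (h : Tr n Q S u v) (hz : Touch n S z) :
    ∃ S₁ S₂, Disjoint S₁ S₂ ∧ S₁ ∪ S₂ = S ∧ Tr n Q S₁ u z ∧ Tr n Q S₂ z v := by
  induction h with
  | nil u => obtain ⟨e, he, _⟩ := hz; simp at he
  | @cons S e i w hq he ht ih =>
    by_cases h1 : z = n e i
    · subst h1
      exact ⟨∅, insert e S, by simp, by simp, Tr.nil _, Tr.cons hq he ht⟩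
    by_cases h2 : z = n e (!i)
    · subst h2
      exact ⟨{e}, S, by simpa using he, by rw [Finset.insert_eq], Tr.single hq, ht⟩
    have h3 : Touch n S z := by
      obtain ⟨f, hf, j, hj⟩ := hz
      rcases Finset.mem_insert.1 hf with rfl | hf
      · exfalso
        cases i <;> cases j <;> simp_all
      · exact ⟨f, hf, j, hj⟩
    obtain ⟨S₁, S₂, hd, hu, t1, t2⟩ := ih h3
    refine ⟨insert e S₁, S₂, ?_, ?_, Tr.cons hq ?_ t1, t2⟩
    · rw [Finset.disjoint_insert_left]
      exact ⟨fun h => he (hu ▸ Finset.mem_union_right _ h), hd⟩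
    · rw [Finset.insert_union, hu]
    · exact fun h => he (hu ▸ Finset.mem_union_left _ h)

theorem Tr.rotate {S : Finset E} {u z : V} (h : Tr n Q S u u) (hz : Touch n S z) :
    Tr n Q S z z := by
  obtain ⟨S₁, S₂, hd, hu, t1, t2⟩ := h.split hz
  have := t2.append t1 hd.symm
  rwa [Finset.union_comm, hu] at this

theorem Tr.mem {S : Finset E} {u v : V} (h : Tr n Q S u v) : ∀ e ∈ S, ∃ i, Q e i := by
  induction h with
  | nil u => simp
  | cons hq he ht ih =>
    intro f hf
    rcases Finset.mem_insert.1 hf with rfl | hf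
    · exact ⟨_, hq⟩
    · exact ih f hf

theorem Tr.prod {S : Finset E} {u v : V} (h : Tr n Q S u v) (s : V → ℤˣ) :
    ∏ e ∈ S, (s (n e false) * s (n e true)) = s u * s v := by
  induction h with
  | nil u => simp
  | @cons S e i v hq he ht ih =>
    rw [Finset.prod_insert he, ih]
    have : ∀ x y z : ℤˣ, (x * y) * (y * z) = x * z := by decide
    have h2 : ∀ x y z : ℤˣ, (x * y) * (x * z) = y * z := by decide
    cases i
    · exact this _ _ _
    · exact h2 _ _ _

theorem Tr.ev {S : Finset E} {u : V} (h : Tr n Q S u u) : EV n S := fun s => by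
  rw [h.prod]; exact Int.units_mul_self _

theorem Tr.touch_start {S : Finset E} {u v : V} (h : Tr n Q S u v) (hS : S.Nonempty) :
    Touch n S u := by
  cases h with
  | nil u => simp at hS
  | @cons S e i v hq he ht => exact ⟨e, by simp, i, rfl⟩

theorem Tr.conn {S : Finset E} {u v : V} (h : Tr n Q S u v) {B : Finset E} (hB : B ⊆ S)
    (hne : B.Nonempty) (hBS : B ≠ S) : ∃ y, Touch n B y ∧ Touch n (S \ B) y := by
  induction h generalizing B with
  | nil u => exact absurd (Finset.subset_empty.1 hB) hBS
  | @cons S e i v hq he ht ih =>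
    by_cases h1 : B ∩ S = ∅
    · have hBe : B = {e} := by
        apply Finset.eq_singleton_iff_nonempty_unique_mem.2 ⟨hne, ?_⟩
        intro x hx
        rcases Finset.mem_insert.1 (hB hx) with h | h
        · exact h
        · exact absurd (h1 ▸ Finset.mem_inter.2 ⟨hx, h⟩) (by simp)
      have hSne : S.Nonempty := by
        by_contra hc
        rw [Finset.not_nonempty_iff_eq_empty] at hc
        subst hc
        exact hBS (by simp [hBe])
      refine ⟨n e (!i), ⟨e, by simp [hBe], _, rfl⟩, (ht.touch_start hSne).mono ?_⟩
      intro x hx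
      simp only [hBe, Finset.mem_sdiff, Finset.mem_insert, Finset.mem_singleton]
      exact ⟨Or.inr hx, fun h => he (h ▸ hx)⟩
    by_cases h2 : B ∩ S = S
    · have hSB : S ⊆ B := Finset.inter_eq_right.1 h2
      have heB : e ∉ B := fun h => hBS (hB.antisymm (Finset.insert_subset h hSB))
      have hSne : S.Nonempty := by
        obtain ⟨x, hx⟩ := hne
        rcases Finset.mem_insert.1 (hB hx) with h | h
        · exact absurd (h ▸ hx) heB
        · exact ⟨x, h⟩
      exact ⟨n e (!i), (ht.touch_start hSne).mono hSB, ⟨e, by simp [heB], _, rfl⟩⟩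
    · obtain ⟨y, hy1, hy2⟩ := ih (B := B ∩ S) Finset.inter_subset_right
        (Finset.nonempty_iff_ne_empty.2 h1) h2
      refine ⟨y, hy1.mono Finset.inter_subset_left, hy2.mono ?_⟩
      intro x hx
      simp only [Finset.mem_sdiff, Finset.mem_inter, Finset.mem_insert] at hx ⊢
      tauto

theorem EV.union {A B : Finset E} (hA : EV n A) (hB : EV n B) (hd : Disjoint A B) :
    EV n (A ∪ B) := fun s => by rw [Finset.prod_union hd, hA s, hB s, one_mul]

theorem EV.sdiff {A B : Finset E} (hA : EV n A) (hB : EV n B) (hd : B ⊆ A) :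
    EV n (A \ B) := fun s => by
  have := Finset.prod_sdiff (f := fun e => s (n e false) * s (n e true)) hd
  rw [hA s, hB s, mul_one] at this
  exact this

/-- An undirected trail. -/
abbrev UT (n : E → Bool → V) : Finset E → V → V → Prop := Tr n (fun _ _ => True)

/-- A trail in an even set whose end `w` is not its start can be extended. -/
theorem extend {A S : Finset E} {z w : V} (hA : EV n A) (hS : S ⊆ A) (h : UT n S z w)
    (hzw : z ≠ w) : ∃ e ∈ A \ S, ∃ i, n e i = w := by
  by_contra hc
  push Not at hc
  let s : V → ℤˣ := fun x => if x = w then -1 else 1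
  have h1 := Finset.prod_sdiff (f := fun e => s (n e false) * s (n e true)) hS
  rw [hA s, h.prod s, Finset.prod_eq_one] at h1
  · simp [s, hzw] at h1
  · intro e he
    have := hc e he
    simp [s, this]

theorem exists_closed {A : Finset E} (hA : EV n A) {e : E} (he : e ∈ A) (i : Bool) :
    ∃ K ⊆ A, K.Nonempty ∧ UT n K (n e i) (n e i) := by
  classical
  obtain ⟨S, hS, hmax⟩ := Finset.exists_max_image
    (A.powerset.filter fun S => ∃ w, UT n S (n e i) w) Finset.card
    ⟨∅, by simpa using ⟨_, Tr.nil _⟩⟩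
  simp only [Finset.mem_filter, Finset.mem_powerset, and_imp, forall_exists_index] at hS hmax
  obtain ⟨hSA, w, hw⟩ := hS
  have h1 := hmax {e} (by simpa using he) _ (Tr.single trivial)
  refine ⟨S, hSA, Finset.card_pos.1 (by simpa using h1), ?_⟩
  by_cases hzw : n e i = w
  · rw [← hzw] at hw; exact hw
  · exfalso
    obtain ⟨f, hf, j, hj⟩ := extend hA hSA hw hzw
    rw [Finset.mem_sdiff] at hf
    subst hj
    have h2 := hmax (insert f S) (Finset.insert_subset hf.1 hSA) _ (hw.snoc trivial hf.2)
    rw [Finset.card_insert_of_notMem hf.2] at h2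
    omega

/-- The component of `z` in an even set. -/
theorem exists_comp {A : Finset E} (hA : EV n A) (z : V) :
    ∃ K ⊆ A, UT n K z z ∧ ∀ e ∈ A \ K, ∀ i, n e i ≠ z ∧ ¬ Touch n K (n e i) := by
  classical
  obtain ⟨K, hK, hmax⟩ := Finset.exists_max_image
    (A.powerset.filter fun S => UT n S z z) Finset.card
    ⟨∅, by simpa using Tr.nil _⟩
  simp only [Finset.mem_filter, Finset.mem_powerset, and_imp] at hK hmax
  obtain ⟨hKA, hw⟩ := hK
  refine ⟨K, hKA, hw, ?_⟩
  intro e he i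
  by_contra hc
  have hc : n e i = z ∨ Touch n K (n e i) := by tauto
  obtain ⟨L, hL, hLne, hLt⟩ := exists_closed (hA.sdiff hw.ev hKA) he i
  have hK' : UT n K (n e i) (n e i) := by
    rcases hc with hc | hc
    · rw [hc]; exact hw
    · exact hw.rotate hc
  have hd : Disjoint K L := by
    rw [Finset.disjoint_right]
    exact fun x hx => (Finset.mem_sdiff.1 (hL hx)).2
  have hz : UT n (K ∪ L) z z := by
    have ht := hK'.append hLt hd
    rcases hc with hc | hc
    · rw [← hc]; exact ht
    · obtain ⟨f, hf, _⟩ := hc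
      exact ht.rotate ((hw.touch_start ⟨f, hf⟩).mono Finset.subset_union_left)
  have h2 := hmax _ (Finset.union_subset hKA (hL.trans Finset.sdiff_subset)) hz
  rw [Finset.card_union_of_disjoint hd] at h2
  have := hLne.card_pos
  omega

theorem units_of_ne {x : ℤˣ} (h : x ≠ -1) : x = 1 := (Int.units_eq_one_or x).resolve_right h

theorem prod_sdiff_units {σ : E → ℤˣ} {A B : Finset E} (h : B ⊆ A) :
    ∏ e ∈ A \ B, σ e = (∏ e ∈ A, σ e) * ∏ e ∈ B, σ e := by
  rw [← Finset.prod_sdiff h, mul_assoc, Int.units_mul_self, mul_one]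

theorem exists_odd_trail (σ : E → ℤˣ) (m : ℕ) : ∀ D : Finset E, D.card ≤ m → EV n D →
    ∏ e ∈ D, σ e = -1 → ∃ D' ⊆ D, ∏ e ∈ D', σ e = -1 ∧ ∃ y, UT n D' y y := by
  induction m with
  | zero =>
    intro D hD _ h
    simp at hD
    subst hD
    simp at h
  | succ m ih =>
    intro D hD hev h
    have hne : D.Nonempty := by
      rw [Finset.nonempty_iff_ne_empty]
      rintro rfl
      simp at h
    obtain ⟨e, he⟩ := hne
    obtain ⟨K, hK, hKne, hKt⟩ := exists_closed hev he false
    by_cases hs : ∏ e ∈ K, σ e = -1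
    · exact ⟨K, hK, hs, _, hKt⟩
    · have hs := units_of_ne hs
      obtain ⟨D', h1, h2⟩ := ih (D \ K) (by
        have := hKne.card_pos
        have := Finset.card_sdiff_add_card_eq_card hK
        omega) (hev.sdiff hKt.ev hK) (by rw [prod_sdiff_units hK, h, hs, mul_one])
      exact ⟨D', h1.trans Finset.sdiff_subset, h2⟩

/-- An odd closed trail at `z` in an odd-containing closed trail `W` through `z`. -/
theorem odd_trail_at (σ : E → ℤˣ) {W D : Finset E} {z : V} (hW : UT n W z z) (hDW : D ⊆ W)
    (hD : EV n D) (hs : ∏ e ∈ D, σ e = -1) :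
    ∃ Z ⊆ W, UT n Z z z ∧ ∏ e ∈ Z, σ e = -1 := by
  obtain ⟨D', hD', hs', y, hy⟩ := exists_odd_trail σ _ D le_rfl hD hs
  have hD'W := hD'.trans hDW
  have hDne : D'.Nonempty := by
    rw [Finset.nonempty_iff_ne_empty]
    rintro rfl
    simp at hs'
  by_cases hz : Touch n D' z
  · exact ⟨D', hD'W, hy.rotate hz, hs'⟩
  obtain ⟨K, hK, hKt, hKc⟩ := exists_comp (hW.ev.sdiff hy.ev hD'W) z
  by_cases hKs : ∏ e ∈ K, σ e = -1
  · exact ⟨K, hK.trans Finset.sdiff_subset, hKt, hKs⟩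
  have hKs := units_of_ne hKs
  have hKW := hK.trans Finset.sdiff_subset
  have hdis : Disjoint K D' := by
    rw [Finset.disjoint_left]
    exact fun x hx => (Finset.mem_sdiff.1 (hK hx)).2
  have hKne : K.Nonempty := by
    obtain ⟨e, he, i, hi⟩ := hW.touch_start (hDne.mono hD'W)
    by_cases heD : e ∈ D'
    · exact absurd ⟨e, heD, i, hi⟩ hz
    by_cases heK : e ∈ K
    · exact ⟨e, heK⟩
    · exact absurd hi (hKc e (by simp [he, heD, heK]) i).1
  have hKneW : K ≠ W := by
    rintro rfl
    obtain ⟨e, he⟩ := hDne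
    exact Finset.disjoint_left.1 hdis (hD'W he) he
  obtain ⟨x, hx1, e, he, i, hi⟩ := hW.conn hKW hKne hKneW
  have heD : e ∈ D' := by
    by_contra hc
    rw [Finset.mem_sdiff] at he
    refine (hKc e ?_ i).2 (hi ▸ hx1)
    simp [he.1, he.2, hc]
  have ht := (hKt.rotate hx1).append (hy.rotate ⟨e, heD, i, hi⟩) hdis
  refine ⟨K ∪ D', Finset.union_subset hKW hD'W,
    ht.rotate ((hKt.touch_start hKne).mono Finset.subset_union_left), ?_⟩
  rw [Finset.prod_union hdis, hKs, hs', one_mul]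

theorem cover (σ : E → ℤˣ) {U A B : Finset E} {u : V} (hU : UT n U u u)
    (hsU : ∏ e ∈ U, σ e = -1) (hA : A ⊆ U) (hB : B ⊆ U) (hAB : Disjoint A B)
    (hAe : EV n A) (hBe : EV n B) (hAs : ∏ e ∈ A, σ e = -1) (hBs : ∏ e ∈ B, σ e = -1) :
    ∃ S T, S ∪ T = U ∧ (∃ z, UT n S z z) ∧ (∃ z, UT n T z z) ∧
      ∏ e ∈ S, σ e = 1 ∧ ∏ e ∈ T, σ e = 1 := by
  classical
  obtain ⟨A', hA', hAs', y, hy⟩ := exists_odd_trail σ _ A le_rfl hAe hAs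
  obtain ⟨X, hX, hmax⟩ := Finset.exists_max_image
    (U.powerset.filter fun X => (∃ z, UT n X z z) ∧ ∏ e ∈ X, σ e = -1 ∧
      ∃ D ⊆ U \ X, EV n D ∧ ∏ e ∈ D, σ e = -1) Finset.card
    ⟨A', by
      simp only [Finset.mem_filter, Finset.mem_powerset]
      refine ⟨hA'.trans hA, ⟨y, hy⟩, hAs', B, ?_, hBe, hBs⟩
      intro x hx
      rw [Finset.mem_sdiff]
      exact ⟨hB hx, fun h => Finset.disjoint_left.1 hAB (hA' h) hx⟩⟩
  simp only [Finset.mem_filter, Finset.mem_powerset, and_imp] at hX hmax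
  obtain ⟨hXU, ⟨x, hXt⟩, hXs, D, hDX, hDe, hDs⟩ := hX
  have hXne : X.Nonempty := by
    rw [Finset.nonempty_iff_ne_empty]
    rintro rfl
    simp at hXs
  have hXneU : X ≠ U := by
    rintro rfl
    have : D = ∅ := by simpa using hDX
    subst this
    simp at hDs
  obtain ⟨z, hz1, hz2⟩ := hU.conn hXU hXne hXneU
  have hXz := hXt.rotate hz1
  have hWe : EV n (U \ X) := hU.ev.sdiff hXt.ev hXU
  have hWs : ∏ e ∈ U \ X, σ e = 1 := by rw [prod_sdiff_units hXU, hsU, hXs]; rfl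
  obtain ⟨K, hK, hKt, hKc⟩ := exists_comp hWe z
  by_cases hKW : K = U \ X
  · -- the complement of `X` is connected
    rw [hKW] at hKt
    obtain ⟨Z, hZ, hZt, hZs⟩ := odd_trail_at σ hKt hDX hDe hDs
    have hd : Disjoint X Z := by
      rw [Finset.disjoint_right]
      exact fun x hx => (Finset.mem_sdiff.1 (hZ hx)).2
    refine ⟨U \ X, X ∪ Z, ?_, ⟨z, hKt⟩, ⟨z, hXz.append hZt hd⟩, hWs, ?_⟩
    · ext e
      simp only [Finset.mem_union, Finset.mem_sdiff]
      have h1 := @hXU e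
      have h2 := fun h => Finset.mem_sdiff.1 (@hZ e h)
      tauto
    · rw [Finset.prod_union hd, hXs, hZs]; rfl
  -- otherwise
  have hKU : K ⊆ U := hK.trans Finset.sdiff_subset
  have hdXK : Disjoint X K := by
    rw [Finset.disjoint_right]
    exact fun x hx => (Finset.mem_sdiff.1 (hK hx)).2
  have hXK : UT n (X ∪ K) z z := hXz.append hKt hdXK
  have hKne : K.Nonempty := by
    obtain ⟨e, he, i, hi⟩ := hz2
    by_cases heK : e ∈ K
    · exact ⟨e, heK⟩
    · exact absurd hi (hKc e (Finset.mem_sdiff.2 ⟨he, heK⟩) i).1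
  obtain ⟨L, hL⟩ : ∃ L, L = (U \ X) \ K := ⟨_, rfl⟩
  rw [← hL] at hKc
  have hLe : EV n L := hL ▸ hWe.sdiff hKt.ev hK
  have hLW : L ⊆ U \ X := hL ▸ Finset.sdiff_subset
  have hLU : L ⊆ U := hLW.trans Finset.sdiff_subset
  have hLne : L.Nonempty := by
    rw [Finset.nonempty_iff_ne_empty]
    intro h
    rw [h] at hL
    exact hKW (hK.antisymm (Finset.sdiff_eq_empty_iff_subset.1 hL.symm))
  have hdXL : Disjoint X L := by
    rw [Finset.disjoint_right]
    exact fun x hx => (Finset.mem_sdiff.1 (hLW hx)).2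
  have hdKL : Disjoint K L := by
    rw [Finset.disjoint_right, hL]
    exact fun x hx => (Finset.mem_sdiff.1 hx).2
  have hall : ∀ e ∈ U, e ∈ X ∨ e ∈ K ∨ e ∈ L := by
    intro e he
    rw [hL, Finset.mem_sdiff, Finset.mem_sdiff]
    tauto
  have hLs : ∏ e ∈ L, σ e = ∏ e ∈ K, σ e := by
    rw [hL, prod_sdiff_units hK, hWs, one_mul]
  have hXL : UT n (X ∪ L) z z := by
    obtain ⟨M, hM, hMt, hMc⟩ := exists_comp (hXt.ev.union hLe hdXL) z
    have hXM : X ⊆ M := by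
      have hne : (M ∩ X).Nonempty := by
        obtain ⟨e, he, i, hi⟩ := hz1
        by_cases heM : e ∈ M
        · exact ⟨e, Finset.mem_inter.2 ⟨heM, he⟩⟩
        · exact absurd hi (hMc e (by simp [he, heM]) i).1
      by_contra hc
      obtain ⟨w, hw, e, he, i, hi⟩ := hXt.conn (B := M ∩ X) Finset.inter_subset_right hne
        (fun h => hc (Finset.inter_eq_right.1 h))
      have : e ∈ X ∧ e ∉ M := by
        simp only [Finset.mem_sdiff, Finset.mem_inter] at he
        tauto
      exact (hMc e (by simp [this]) i).2 (hi ▸ hw.mono Finset.inter_subset_left)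
    by_cases hMX : M = X ∪ L
    · exact hMX ▸ hMt
    exfalso
    have hML : ∃ f ∈ L, f ∉ M := by
      by_contra hc
      push Not at hc
      exact hMX (hM.antisymm (Finset.union_subset hXM hc))
    obtain ⟨f, hfL, hfM⟩ := hML
    obtain ⟨w, hw, e, he, i, hi⟩ := hU.conn (B := M ∪ K)
      (Finset.union_subset (hM.trans (Finset.union_subset hXU hLU)) hKU)
      (hKne.mono Finset.subset_union_right) (by
        intro h
        have := hLU hfL
        rw [← h, Finset.mem_union] at this
        rcases this with h | h
        · exact hfM h
        · exact Finset.disjoint_left.1 hdKL h hfL)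
    simp only [Finset.mem_sdiff, Finset.mem_union, not_or] at he
    have heL : e ∈ L := by
      rcases hall e he.1 with h | h | h
      · exact absurd (hXM h) he.2.1
      · exact absurd h he.2.2
      · exact h
    obtain ⟨g, hg, j, hj⟩ := hw
    rcases Finset.mem_union.1 hg with hg | hg
    · exact (hMc e (by simp [heL, he.2.1]) i).2 ⟨g, hg, j, by rw [hj, hi]⟩
    · exact (hKc e heL i).2 ⟨g, hg, j, by rw [hj, hi]⟩
  by_cases hKs : ∏ e ∈ K, σ e = -1
  · refine ⟨X ∪ K, X ∪ L, ?_, ⟨z, hXK⟩, ⟨z, hXL⟩, ?_, ?_⟩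
    · ext e
      have h1 := @hXU e
      have h2 := @hKU e
      have h3 := @hLU e
      have h4 := hall e
      simp only [Finset.mem_union]
      tauto
    · rw [Finset.prod_union hdXK, hXs, hKs]; rfl
    · rw [Finset.prod_union hdXL, hXs, hLs, hKs]; rfl
  exfalso
  have hKs := units_of_ne hKs
  rw [hKs] at hLs
  have hDK : EV n (D ∩ K) := by
    intro s
    let s' : V → ℤˣ := fun v => if Touch n K v then s v else 1
    rw [← hDe s', ← Finset.prod_inter_mul_prod_sdiff D K]
    rw [Finset.prod_eq_one (s := D \ K), mul_one]
    · refine Finset.prod_congr rfl fun e he => ?_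
      have heK := (Finset.mem_inter.1 he).2
      have h : ∀ i, Touch n K (n e i) := fun i => ⟨e, heK, i, rfl⟩
      simp [s', h]
    · intro e he
      rw [Finset.mem_sdiff] at he
      have heL : e ∈ L := by
        rw [hL, Finset.mem_sdiff]
        exact ⟨hDX he.1, he.2⟩
      have h : ∀ i, ¬ Touch n K (n e i) := fun i => (hKc e heL i).2
      simp [s', h]
  have hDL : EV n (D \ K) := by
    have := hDe.sdiff hDK Finset.inter_subset_left
    rwa [Finset.sdiff_inter_self_left] at this
  have hprod := Finset.prod_inter_mul_prod_sdiff D K σ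
  rw [hDs] at hprod
  by_cases h : ∏ e ∈ D ∩ K, σ e = -1
  · have := hmax (X ∪ L) (Finset.union_subset hXU hLU) ⟨z, hXL⟩
      (by rw [Finset.prod_union hdXL, hXs, hLs, mul_one]) ⟨D ∩ K, by
        intro e he
        rw [Finset.mem_inter] at he
        have h1 := Finset.disjoint_right.1 hdXK he.2
        have h2 := Finset.disjoint_left.1 hdKL he.2
        simp [h1, h2, hKU he.2], hDK, h⟩
    rw [Finset.card_union_of_disjoint hdXL] at this
    have := hLne.card_pos
    omega
  · have h := units_of_ne h
    rw [h, one_mul] at hprod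
    have := hmax (X ∪ K) (Finset.union_subset hXU hKU) ⟨z, hXK⟩
      (by rw [Finset.prod_union hdXK, hXs, hKs, mul_one]) ⟨D \ K, by
        intro e he
        rw [Finset.mem_sdiff] at he
        have h1 := Finset.mem_sdiff.1 (hDX he.1)
        simp [h1, he.2], hDL, hprod⟩
    rw [Finset.card_union_of_disjoint hdXK] at this
    have := hKne.card_pos
    omega

/-- Indicator. -/
def dl (u w : V) : ℤ := if u = w then 1 else 0

/-- Direction of traversal. -/
def ds (i : Bool) : ℤ := if i then -1 else 1

variable [Fintype V] [Fintype E]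

/-- Signed boundary of `y` at `w`. -/
def bd (n : E → Bool → V) (σ : E → ℤˣ) (y : E → ℤ) (w : V) : ℤ :=
  ∑ e, y e * (dl (n e false) w - (σ e : ℤ) * dl (n e true) w)

theorem bd_add (σ : E → ℤˣ) (y z : E → ℤ) (w : V) :
    bd n σ (fun e => y e + z e) w = bd n σ y w + bd n σ z w := by
  simp only [bd, ← Finset.sum_add_distrib]
  exact Finset.sum_congr rfl fun e _ => by ring

theorem bd_smul (σ : E → ℤˣ) (c : ℤ) (z : E → ℤ) (w : V) :
    bd n σ (fun e => c * z e) w = c * bd n σ z w := by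
  simp only [bd, Finset.mul_sum]
  exact Finset.sum_congr rfl fun e _ => by ring

theorem bd_single (σ : E → ℤˣ) (e : E) (c : ℤ) (w : V) :
    bd n σ (fun f => if f = e then c else 0) w
      = c * (dl (n e false) w - (σ e : ℤ) * dl (n e true) w) := by
  simp [bd, ite_mul]

theorem Tr.flow {S : Finset E} {u v : V} (σ : E → ℤˣ) (h : Tr n Q S u v) :
    ∃ χ : E → ℤ, (∀ e ∉ S, χ e = 0) ∧ (∀ e ∈ S, χ e = 1 ∨ χ e = -1) ∧
      (∀ w, bd n σ χ w = dl u w - ((∏ e ∈ S, σ e : ℤˣ) : ℤ) * dl v w) ∧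
      ((∀ e, σ e = 1) → ∀ e ∈ S, ∃ i, Q e i ∧ χ e = ds i) := by
  induction h with
  | nil u => exact ⟨fun _ => 0, by simp, by simp, by simp [bd], by simp⟩
  | @cons S e i v hq he ht ih =>
    obtain ⟨χ, h0, h1, h2, h3⟩ := ih
    have hσ : (σ e : ℤ) = 1 ∨ (σ e : ℤ) = -1 := by
      rcases Int.units_eq_one_or (σ e) with h | h <;> simp [h]
    have hσσ : (σ e : ℤ) * σ e = 1 := by rcases hσ with h | h <;> rw [h] <;> rfl
    obtain ⟨c, hc⟩ : ∃ c : ℤ, c = if i then -(σ e : ℤ) else 1 := ⟨_, rfl⟩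
    refine ⟨fun f => (σ e : ℤ) * χ f + (if f = e then c else 0), ?_, ?_, ?_, ?_⟩
    · intro f hf
      rw [Finset.mem_insert, not_or] at hf
      simp [hf.1, h0 f hf.2]
    · intro f hf
      by_cases hfe : f = e
      · subst hfe
        simp only [h0 f he, hc]
        cases i <;> rcases hσ with h | h <;> simp [h]
      · have := h1 f ((Finset.mem_insert.1 hf).resolve_left hfe)
        rcases hσ with h | h <;> rcases this with h' | h' <;> simp [h, h', hfe]
    · intro w
      rw [bd_add, bd_smul, bd_single, h2, Finset.prod_insert he, hc]
      push_cast
      cases i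
      · simp only [Bool.not_false, Bool.false_eq_true, if_false]; ring
      · simp only [Bool.not_true, if_true]
        linear_combination (dl (n e true) w) * hσσ
    · intro hall f hf
      by_cases hfe : f = e
      · subst hfe
        refine ⟨i, hq, ?_⟩
        simp only [h0 f he, hc, hall f, ds]
        cases i <;> simp
      · obtain ⟨j, hj, hj'⟩ := h3 hall f ((Finset.mem_insert.1 hf).resolve_left hfe)
        exact ⟨j, hj, by simp [hfe, hall e, hj']⟩

theorem Tr.toUT {S : Finset E} {u v : V} (h : Tr n Q S u v) : UT n S u v := by
  induction h with
  | nil u => exact Tr.nil u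
  | cons hq he ht ih => exact Tr.cons trivial he ih

/-- Augmenting step. -/
theorem augment (F : Finset E) (y : E → ℤ) (hy : ∀ e, |y e| ≤ 1) (hF : ∀ e ∉ F, y e = 0)
    (v b : V) :
    (∃ y' : E → ℤ, (∀ e, |y' e| ≤ 1) ∧ (∀ e ∉ F, y' e = 0) ∧
      ∀ w, bd n 1 y' w = bd n 1 y w + dl v w - dl b w) ∨
    ∃ Y : Finset V, v ∈ Y ∧ b ∉ Y ∧
      ∀ e ∈ F, ∀ i, n e i ∈ Y → n e (!i) ∉ Y → y e * ds i = 1 := by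
  classical
  let Q : E → Bool → Prop := fun e i => e ∈ F ∧ y e * ds i ≤ 0
  by_cases hb : ∃ S, Tr n Q S v b
  · left
    obtain ⟨S, hS⟩ := hb
    obtain ⟨χ, h0, h1, h2, h3⟩ := hS.flow (1 : E → ℤˣ)
    refine ⟨fun e => y e + χ e, ?_, ?_, ?_⟩
    · intro e
      by_cases he : e ∈ S
      · obtain ⟨i, hi, hi'⟩ := h3 (fun _ => rfl) e he
        have h4 := hi.2
        have h5 := abs_le.1 (hy e)
        simp only [hi']
        rw [abs_le]
        cases i <;> simp [ds] at h4 ⊢ <;> constructor <;> omega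
      · simp [h0 e he, hy e]
    · intro e he
      have heS : e ∉ S := fun h => he (by obtain ⟨i, hi⟩ := hS.mem e h; exact hi.1)
      simp [h0 e heS, hF e he]
    · intro w
      rw [bd_add, h2]
      simp
      ring
  · right
    refine ⟨Finset.univ.filter fun w => ∃ S, Tr n Q S v w, ?_, ?_, ?_⟩
    · simpa using ⟨_, Tr.nil v⟩
    · simpa using hb
    · intro e he i h1 h2
      simp only [Finset.mem_filter, Finset.mem_univ, true_and] at h1 h2
      obtain ⟨S, hS⟩ := h1
      by_contra hc
      have hq : Q e i := by
        refine ⟨he, ?_⟩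
        have h5 := abs_le.1 (hy e)
        cases i <;> simp [ds] at hc ⊢ <;> omega
      by_cases heS : e ∈ S
      · obtain ⟨S₁, S₂, _, _, t, _⟩ := hS.split (z := n e (!i)) ⟨e, heS, _, rfl⟩
        exact h2 ⟨_, t⟩
      · exact h2 ⟨_, hS.snoc hq heS⟩

/-- Extracting a directed trail from a flow. -/
theorem extract (y : E → ℤ) (hy : ∀ e, |y e| ≤ 1) (v : V) :
    ∃ (S : Finset E) (w : V) (y' : E → ℤ), UT n S v w ∧ (∀ e ∈ S, y e ≠ 0 ∧ y' e = 0) ∧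
      (∀ e ∉ S, y' e = y e) ∧ (∀ x, bd n 1 y' x = bd n 1 y x - dl v x + dl w x) ∧
      bd n 1 y' w ≤ 0 := by
  classical
  let Q : E → Bool → Prop := fun e i => y e * ds i = 1
  obtain ⟨S, hS, hmax⟩ := Finset.exists_max_image
    (Finset.univ.filter fun S => ∃ w, Tr n Q S v w) Finset.card
    ⟨∅, by simpa using ⟨_, Tr.nil _⟩⟩
  simp only [Finset.mem_filter, Finset.mem_univ, true_and, forall_exists_index] at hS hmax
  obtain ⟨w, hw⟩ := hS
  obtain ⟨χ, h0, h1, h2, h3⟩ := hw.flow (1 : E → ℤˣ)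
  have hSy : ∀ e ∈ S, y e = χ e := by
    intro e he
    obtain ⟨i, hi, hi'⟩ := h3 (fun _ => rfl) e he
    rw [hi']
    have hi : y e * ds i = 1 := hi
    cases i <;> simp [ds] at hi ⊢ <;> omega
  have hstep : ∀ e ∉ S, ∀ i, n e i = w → y e * ds i ≠ 1 := by
    intro e he i hi hq
    subst hi
    have := hmax _ _ (hw.snoc (i := i) hq he)
    rw [Finset.card_insert_of_notMem he] at this
    omega
  refine ⟨S, w, fun e => y e + (-1) * χ e, hw.toUT, ?_, ?_, ?_, ?_⟩
  · intro e he
    rw [hSy e he]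
    refine ⟨?_, by have := hSy e he; dsimp only; omega⟩
    rcases h1 e he with h | h <;> rw [h] <;> decide
  · intro e he
    simp [h0 e he]
  · intro x
    rw [bd_add, bd_smul, h2]
    simp
    ring
  · refine Finset.sum_nonpos fun e _ => ?_
    by_cases he : e ∈ S
    · simp [hSy e he]
    · have h5 := abs_le.1 (hy e)
      have hf := hstep e he false
      have ht := hstep e he true
      simp only [h0 e he, dl, ds] at hf ht ⊢
      by_cases p : n e false = w <;> by_cases q : n e true = w <;>
        simp [p, q] at hf ht ⊢ <;> omega

theorem sum_bd (y : E → ℤ) (Y : Finset V) :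
    ∑ w ∈ Y, bd n 1 y w
      = ∑ e, y e * ((if n e false ∈ Y then 1 else 0) - (if n e true ∈ Y then 1 else 0)) := by
  simp only [bd]
  rw [Finset.sum_comm]
  refine Finset.sum_congr rfl fun e _ => ?_
  rw [← Finset.mul_sum, Finset.sum_sub_distrib]
  simp [dl]

/-- Number of crossing edges of a saturated cut. -/
theorem card_cross (F : Finset E) (y : E → ℤ) (hF : ∀ e ∉ F, y e = 0) (Y : Finset V)
    (hsat : ∀ e ∈ F, ∀ i, n e i ∈ Y → n e (!i) ∉ Y → y e * ds i = 1) :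
    ((F.filter fun e => ¬ (n e false ∈ Y ↔ n e true ∈ Y)).card : ℤ) = ∑ w ∈ Y, bd n 1 y w := by
  rw [sum_bd, Finset.card_filter, Nat.cast_sum, ← Finset.sum_subset (Finset.subset_univ F)]
  · refine Finset.sum_congr rfl fun e he => ?_
    have h1 := hsat e he false
    have h2 := hsat e he true
    by_cases p : n e false ∈ Y <;> by_cases q : n e true ∈ Y <;>
      simp [p, q, ds] at h1 h2 ⊢ <;> omega
  · intro e _ he
    simp [hF e he]

theorem dl_self (w : V) : dl w w = 1 := by simp [dl]

theorem dl_ne {u w : V} (h : u ≠ w) : dl u w = 0 := by simp [dl, h]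

theorem dl_nonneg (u w : V) : 0 ≤ dl u w := by
  simp only [dl]
  split_ifs <;> decide

/-- Switched sign. -/
def sw (n : E → Bool → V) (σ : E → ℤˣ) (s : V → ℤˣ) (e : E) : ℤˣ :=
  σ e * (s (n e false) * s (n e true))

theorem EV.prod_sw {A : Finset E} (hA : EV n A) (σ : E → ℤˣ) (s : V → ℤˣ) :
    ∏ e ∈ A, sw n σ s e = ∏ e ∈ A, σ e := by
  simp only [sw]
  rw [Finset.prod_mul_distrib, hA s, mul_one]

/-- No switching of `A` has exactly one negative edge. -/
def NT (n : E → Bool → V) (σ : E → ℤˣ) (A : Finset E) : Prop :=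
  ∀ s : V → ℤˣ, (A.filter fun e => sw n σ s e = -1).card ≠ 1

theorem prod_eq_pow (τ : E → ℤˣ) (A : Finset E) :
    ∏ e ∈ A, τ e = (-1) ^ (A.filter fun e => τ e = -1).card := by
  rw [← Finset.prod_filter_mul_prod_filter_not A (fun e => τ e = -1),
    Finset.prod_congr rfl (g := fun _ => -1) (fun e he => (Finset.mem_filter.1 he).2),
    Finset.prod_eq_one (s := A.filter fun e => ¬ τ e = -1)
      (fun e he => units_of_ne (Finset.mem_filter.1 he).2)]
  simp

theorem NT.three {σ : E → ℤˣ} {A : Finset E} (h : NT n σ A) (hA : EV n A)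
    (hs : ∏ e ∈ A, σ e = -1) (s : V → ℤˣ) :
    3 ≤ (A.filter fun e => sw n σ s e = -1).card := by
  have h1 := h s
  have h2 := hA.prod_sw σ s
  rw [prod_eq_pow, hs] at h2
  generalize (A.filter fun e => sw n σ s e = -1).card = k at h1 h2
  match k, h1, h2 with
  | 0, _, h2 => simp at h2
  | 1, h1, _ => exact absurd rfl h1
  | 2, _, h2 => simp at h2
  | k + 3, _, _ => omega

/-- Switching at `Y`. -/
theorem sw_flip (σ : E → ℤˣ) (s : V → ℤˣ) (Y : Finset V) (e : E) :
    sw n σ (fun w => if w ∈ Y then - s w else s w) e =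
      if (n e false ∈ Y ↔ n e true ∈ Y) then sw n σ s e else - sw n σ s e := by
  by_cases p : n e false ∈ Y <;> by_cases q : n e true ∈ Y <;> simp [sw, p, q]

theorem direct (σ : E → ℤˣ) {A : Finset E} (hA : EV n A) (hs : ∏ e ∈ A, σ e = -1)
    (hNT : NT n σ A) (s : V → ℤˣ) {e₁ e₂ f : E} (h12 : e₁ ≠ e₂) (he₁ : e₁ ∈ A) (he₂ : e₂ ∈ A)
    (ht₁ : sw n σ s e₁ = -1) (ht₂ : sw n σ s e₂ = -1)
    (hU : ∀ e ∈ A, sw n σ s e = -1 → e = e₁ ∨ e = e₂ ∨ e = f)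
    (i j : Bool) (hij : n e₁ i = n e₂ j) :
    ∃ B C, B ⊆ A ∧ C ⊆ A ∧ Disjoint B C ∧ EV n B ∧ EV n C ∧
      ∏ e ∈ B, σ e = -1 ∧ ∏ e ∈ C, σ e = -1 := by
  classical
  obtain ⟨v, hv⟩ : ∃ v, v = n e₁ i := ⟨_, rfl⟩
  obtain ⟨a, ha⟩ : ∃ a, a = n e₁ (!i) := ⟨_, rfl⟩
  obtain ⟨b, hb⟩ : ∃ b, b = n e₂ (!j) := ⟨_, rfl⟩
  have hv2 : v = n e₂ j := hv.trans hij
  obtain ⟨F, hF⟩ : ∃ F, F = A \ {e₁, e₂, f} := ⟨_, rfl⟩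
  have hFA : F ⊆ A := hF ▸ Finset.sdiff_subset
  have hF1 : ∀ e ∈ F, sw n σ s e = 1 := by
    intro e he
    apply units_of_ne
    intro h
    rw [hF, Finset.mem_sdiff] at he
    have := hU e he.1 h
    simp at he
    tauto
  have hAF : ∀ e ∈ A, e = e₁ ∨ e = e₂ ∨ e = f ∨ e ∈ F := by
    intro e he
    rw [hF]
    simp [he]
    tauto
  have he₁F : e₁ ∉ F := by simp [hF]
  have he₂F : e₂ ∉ F := by simp [hF]
  have hneg : ∀ x : ℤˣ, - x = -1 → x = 1 := by decide
  have h11 : ((1 : ℤˣ) = -1) ↔ False := by decide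
  -- crossing
  have hc₁ : ∀ Y : Finset V, v ∈ Y → a ∉ Y → ¬ (n e₁ false ∈ Y ↔ n e₁ true ∈ Y) := by
    intro Y h1 h2
    subst hv ha
    cases i <;> simp_all
  have hc₂ : ∀ Y : Finset V, v ∈ Y → b ∉ Y → ¬ (n e₂ false ∈ Y ↔ n e₂ true ∈ Y) := by
    intro Y h1 h2
    rw [hv2] at h1
    subst hb
    cases j <;> simp_all
  -- first flow
  obtain ⟨y₁, hy₁, hyF₁, hbd₁⟩ : ∃ y' : E → ℤ, (∀ e, |y' e| ≤ 1) ∧ (∀ e ∉ F, y' e = 0) ∧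
      ∀ w, bd n 1 y' w = dl v w - dl a w := by
    rcases augment (n := n) F (fun _ => 0) (by simp) (by simp) v a with h | h
    · obtain ⟨y', h1, h2, h3⟩ := h
      exact ⟨y', h1, h2, fun w => by rw [h3]; simp [bd]⟩
    · exfalso
      obtain ⟨Y, hvY, haY, hsat⟩ := h
      have h3 := hNT.three hA hs (fun w => if w ∈ Y then - s w else s w)
      have h4 : (A.filter fun e => sw n σ (fun w => if w ∈ Y then - s w else s w) e = -1)
          ⊆ {e₂, f} := by
        intro e he
        rw [Finset.mem_filter, sw_flip] at he
        rcases hAF e he.1 with rfl | rfl | rfl | h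
        · have := he.2
          rw [if_neg (hc₁ Y hvY haY), ht₁] at this
          exact absurd this (by decide)
        · simp
        · simp
        · have := he.2
          have q1 := hsat e h false
          have q2 := hsat e h true
          rw [if_pos (by simp at q1 q2; tauto), hF1 e h] at this
          exact absurd this (by decide)
      have := (Finset.card_le_card h4).trans Finset.card_le_two
      omega
  -- second flow
  obtain ⟨y₂, hy₂, hyF₂, hbd₂⟩ : ∃ y' : E → ℤ, (∀ e, |y' e| ≤ 1) ∧ (∀ e ∉ F, y' e = 0) ∧
      ∀ w, bd n 1 y' w = dl v w - dl a w + dl v w - dl b w := by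
    rcases augment (n := n) F y₁ hy₁ hyF₁ v b with h | h
    · obtain ⟨y', h1, h2, h3⟩ := h
      exact ⟨y', h1, h2, fun w => by rw [h3, hbd₁]⟩
    · exfalso
      obtain ⟨Y, hvY, hbY, hsat⟩ := h
      have hcr := card_cross F y₁ hyF₁ Y hsat
      simp only [hbd₁, Finset.sum_sub_distrib] at hcr
      have hsv : ∑ w ∈ Y, dl v w = 1 := by simp [dl, hvY]
      have hsa : ∑ w ∈ Y, dl a w = if a ∈ Y then 1 else 0 := by simp [dl]
      rw [hsv, hsa] at hcr
      have h3 := hNT.three hA hs (fun w => if w ∈ Y then - s w else s w)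
      by_cases haY : a ∈ Y
      · rw [if_pos haY] at hcr
        have hcr : (F.filter fun e => ¬ (n e false ∈ Y ↔ n e true ∈ Y)) = ∅ := by
          rw [← Finset.card_eq_zero]; omega
        have h4 : (A.filter fun e => sw n σ (fun w => if w ∈ Y then - s w else s w) e = -1)
            ⊆ {e₁, f} := by
          intro e he
          rw [Finset.mem_filter, sw_flip] at he
          rcases hAF e he.1 with rfl | rfl | rfl | h
          · simp
          · have := he.2
            rw [if_neg (hc₂ Y hvY hbY), ht₂] at this
            exact absurd this (by decide)
          · simp
          · have := he.2
            rw [Finset.filter_eq_empty_iff] at hcr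
            rw [if_pos (not_not.1 (hcr h)), hF1 e h] at this
            exact absurd this (by decide)
        have := (Finset.card_le_card h4).trans Finset.card_le_two
        omega
      · rw [if_neg haY] at hcr
        have h4 : (A.filter fun e => sw n σ (fun w => if w ∈ Y then - s w else s w) e = -1)
            ⊆ insert f (F.filter fun e => ¬ (n e false ∈ Y ↔ n e true ∈ Y)) := by
          intro e he
          rw [Finset.mem_filter, sw_flip] at he
          rcases hAF e he.1 with rfl | rfl | rfl | h
          · have := he.2
            rw [if_neg (hc₁ Y hvY haY), ht₁] at this
            exact absurd this (by decide)
          · have := he.2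
            rw [if_neg (hc₂ Y hvY hbY), ht₂] at this
            exact absurd this (by decide)
          · simp
          · refine Finset.mem_insert_of_mem (Finset.mem_filter.2 ⟨h, fun hc => ?_⟩)
            have := he.2
            rw [if_pos hc, hF1 e h] at this
            exact absurd this (by decide)
        have := (Finset.card_le_card h4).trans (Finset.card_insert_le _ _)
        omega
  -- two edge-disjoint trails
  obtain ⟨S₁, S₂, hS₁F, hS₂F, hSS, hT₁, hT₂⟩ : ∃ S₁ S₂, S₁ ⊆ F ∧ S₂ ⊆ F ∧ Disjoint S₁ S₂ ∧
      UT n S₁ v a ∧ UT n S₂ v b := by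
    obtain ⟨S, w, y', hSt, hSy, hSn, hSb, hSw⟩ := extract (n := n) y₂ hy₂ v
    have hy' : ∀ e, |y' e| ≤ 1 := by
      intro e
      by_cases he : e ∈ S
      · simp [(hSy e he).2]
      · rw [hSn e he]; exact hy₂ e
    obtain ⟨S', w', y'', hSt', hSy', hSn', hSb', hSw'⟩ := extract (n := n) y' hy' v
    have hSF : S ⊆ F := by
      intro e he
      by_contra hc
      exact (hSy e he).1 (hyF₂ e hc)
    have hSS' : Disjoint S S' := by
      rw [Finset.disjoint_left]
      intro e he he'
      exact (hSy' e he').1 (hSy e he).2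
    have hSF' : S' ⊆ F := by
      intro e he
      by_contra hc
      have heS : e ∉ S := fun h => Finset.disjoint_left.1 hSS' h he
      apply (hSy' e he).1
      rw [hSn e heS]
      exact hyF₂ e hc
    rw [hSb, hbd₂] at hSw
    rw [hSb', hSb, hbd₂] at hSw'
    have hwab : w = a ∨ w = b := by
      by_contra hc
      push Not at hc
      rw [dl_ne hc.1.symm, dl_ne hc.2.symm, dl_self] at hSw
      have := dl_nonneg v w
      omega
    rcases hwab with rfl | rfl
    · have : w' = b := by
        by_contra hc
        rw [dl_ne (Ne.symm hc), dl_self] at hSw'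
        omega
      subst this
      exact ⟨S, S', hSF, hSF', hSS', hSt, hSt'⟩
    · have : w' = a := by
        by_contra hc
        rw [dl_ne (Ne.symm hc), dl_self] at hSw'
        omega
      subst this
      exact ⟨S', S, hSF', hSF, hSS'.symm, hSt', hSt⟩
  have hC₁ : UT n (insert e₁ S₁) a a := by
    have := Tr.cons (n := n) (Q := fun _ _ => True) (S := S₁) (e := e₁) (i := !i) (v := a)
      trivial (fun h => he₁F (hS₁F h)) (by rw [Bool.not_not, ← hv]; exact hT₁)
    rwa [← ha] at this
  have hC₂ : UT n (insert e₂ S₂) b b := by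
    have := Tr.cons (n := n) (Q := fun _ _ => True) (S := S₂) (e := e₂) (i := !j) (v := b)
      trivial (fun h => he₂F (hS₂F h)) (by rw [Bool.not_not, ← hv2]; exact hT₂)
    rwa [← hb] at this
  refine ⟨insert e₁ S₁, insert e₂ S₂, Finset.insert_subset he₁ (hS₁F.trans hFA),
    Finset.insert_subset he₂ (hS₂F.trans hFA), ?_, hC₁.ev, hC₂.ev, ?_, ?_⟩
  · rw [Finset.disjoint_insert_left, Finset.disjoint_insert_right, Finset.mem_insert, not_or]
    exact ⟨⟨h12, fun h => he₁F (hS₂F h)⟩, fun h => he₂F (hS₁F h), hSS⟩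
  · rw [← hC₁.ev.prod_sw σ s, Finset.prod_insert (fun h => he₁F (hS₁F h)), ht₁,
      Finset.prod_eq_one fun e he => hF1 e (hS₁F he), mul_one]
  · rw [← hC₂.ev.prod_sw σ s, Finset.prod_insert (fun h => he₂F (hS₂F h)), ht₂,
      Finset.prod_eq_one fun e he => hF1 e (hS₂F he), mul_one]

theorem prod_lift {e₁ e₂ : E} {g g' : E → ℤˣ} (h1 : g' e₁ = g e₁ * g e₂)
    (h2 : ∀ e, e ≠ e₁ → g' e = g e) {B : Finset E} (hB : e₂ ∉ B) :
    ∏ e ∈ (if e₁ ∈ B then insert e₂ B else B), g e = ∏ e ∈ B, g' e := by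
  split_ifs with h
  · rw [Finset.prod_insert hB, ← Finset.mul_prod_erase B g h, ← Finset.mul_prod_erase B g' h, h1,
      Finset.prod_congr rfl (fun e he => h2 e (Finset.ne_of_mem_erase he))]
    rw [← mul_assoc, mul_comm (g e₂)]
  · exact Finset.prod_congr rfl fun e he => (h2 e (fun h' => h (h' ▸ he))).symm

theorem two_odd (m : ℕ) : ∀ (n : E → Bool → V) (σ : E → ℤˣ) (A : Finset E), A.card ≤ m →
    EV n A → ∏ e ∈ A, σ e = -1 → NT n σ A →
    ∃ B C, B ⊆ A ∧ C ⊆ A ∧ Disjoint B C ∧ EV n B ∧ EV n C ∧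
      ∏ e ∈ B, σ e = -1 ∧ ∏ e ∈ C, σ e = -1 := by
  classical
  induction m with
  | zero =>
    intro n σ A hA _ h
    simp at hA
    subst hA
    simp at h
  | succ m ih =>
    intro n σ A hAc hA hs hNT
    by_cases hadj : ∃ e₁ ∈ A, ∃ e₂ ∈ A, e₁ ≠ e₂ ∧ ∃ i j, n e₁ i = n e₂ j
    · obtain ⟨e₁, he₁, e₂, he₂, h12, i, j, hij⟩ := hadj
      let n' : E → Bool → V :=
        Function.update n e₁ (fun k => if k then n e₂ (!j) else n e₁ (!i))
      let σ' : E → ℤˣ := Function.update σ e₁ (σ e₁ * σ e₂)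
      have hn' : ∀ e, e ≠ e₁ → n' e = n e := fun e he => by simp [n', he]
      have hσ' : ∀ e, e ≠ e₁ → σ' e = σ e := fun e he => by simp [σ', he]
      have hσ1 : σ' e₁ = σ e₁ * σ e₂ := by simp [σ']
      have hgs1 : ∀ s : V → ℤˣ, s (n' e₁ false) * s (n' e₁ true) =
          (s (n e₁ false) * s (n e₁ true)) * (s (n e₂ false) * s (n e₂ true)) := by
        intro s
        have q : ∀ x a b : ℤˣ, a * b = (x * a) * (x * b) := by decide
        have := q (s (n e₁ i)) (s (n e₁ (!i))) (s (n e₂ (!j)))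
        simp only [n', Function.update_self]
        simp only [if_true, Bool.false_eq_true, if_false]
        rw [this]
        congr 1
        · cases i
          · rfl
          · exact mul_comm _ _
        · rw [hij]
          cases j
          · rfl
          · exact mul_comm _ _
      have hgs2 : ∀ s : V → ℤˣ, ∀ e, e ≠ e₁ → s (n' e false) * s (n' e true) =
          s (n e false) * s (n e true) := fun s e he => by rw [hn' e he]
      have hsw1 : ∀ s, sw n' σ' s e₁ = sw n σ s e₁ * sw n σ s e₂ := by
        intro s
        simp only [sw]
        rw [hgs1, hσ1, mul_mul_mul_comm]
      have hsw2 : ∀ s e, e ≠ e₁ → sw n' σ' s e = sw n σ s e := by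
        intro s e he
        simp only [sw]
        rw [hgs2 s e he, hσ' e he]
      have hlA : (if e₁ ∈ A.erase e₂ then insert e₂ (A.erase e₂) else A.erase e₂) = A := by
        rw [if_pos (Finset.mem_erase.2 ⟨h12, he₁⟩), Finset.insert_erase he₂]
      have hA' : EV n' (A.erase e₂) := by
        intro s
        rw [← prod_lift (hgs1 s) (hgs2 s) (Finset.notMem_erase e₂ A), hlA]
        exact hA s
      have hs' : ∏ e ∈ A.erase e₂, σ' e = -1 := by
        rw [← prod_lift hσ1 hσ' (Finset.notMem_erase e₂ A), hlA]
        exact hs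
      by_cases hNT' : NT n' σ' (A.erase e₂)
      · obtain ⟨B, C, hB, hC, hBC, hBe, hCe, hBs, hCs⟩ := ih n' σ' (A.erase e₂)
          (by have := Finset.card_erase_add_one he₂; omega) hA' hs' hNT'
        have hB2 : e₂ ∉ B := fun h => Finset.notMem_erase e₂ A (hB h)
        have hC2 : e₂ ∉ C := fun h => Finset.notMem_erase e₂ A (hC h)
        have hsub : ∀ D ⊆ A.erase e₂, (if e₁ ∈ D then insert e₂ D else D) ⊆ A := by
          intro D hD
          have hDA := hD.trans (Finset.erase_subset _ _)
          split_ifs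
          · exact Finset.insert_subset he₂ hDA
          · exact hDA
        refine ⟨if e₁ ∈ B then insert e₂ B else B, if e₁ ∈ C then insert e₂ C else C,
          hsub B hB, hsub C hC, ?_, ?_, ?_, ?_, ?_⟩
        · split_ifs with h1 h2 h2
          · exact absurd h2 (Finset.disjoint_left.1 hBC h1)
          · rw [Finset.disjoint_insert_left]; exact ⟨hC2, hBC⟩
          · rw [Finset.disjoint_insert_right]; exact ⟨hB2, hBC⟩
          · exact hBC
        · intro s
          rw [prod_lift (hgs1 s) (hgs2 s) hB2]; exact hBe s
        · intro s
          rw [prod_lift (hgs1 s) (hgs2 s) hC2]; exact hCe s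
        · rw [prod_lift hσ1 hσ' hB2]; exact hBs
        · rw [prod_lift hσ1 hσ' hC2]; exact hCs
      · simp only [NT, not_forall, not_not] at hNT'
        obtain ⟨s, hcard⟩ := hNT'
        obtain ⟨f, hf⟩ := Finset.card_eq_one.1 hcard
        have hf' : ∀ e, e ∈ A → e ≠ e₂ → (sw n' σ' s e = -1 ↔ e = f) := by
          intro e he hne
          have := Finset.ext_iff.1 hf e
          simp only [Finset.mem_filter, Finset.mem_erase, Finset.mem_singleton] at this
          tauto
        have hf1 := hf' e₁ he₁ h12
        rw [hsw1] at hf1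
        have hone : ¬ ∃ e₀ ∈ A, ∀ e ∈ A, (sw n σ s e = -1 ↔ e = e₀) := by
          rintro ⟨e₀, h0, h⟩
          apply hNT s
          rw [Finset.card_eq_one]
          refine ⟨e₀, ?_⟩
          ext e
          simp only [Finset.mem_filter, Finset.mem_singleton]
          constructor
          · exact fun h' => (h e h'.1).1 h'.2
          · rintro rfl
            exact ⟨h0, (h _ h0).2 rfl⟩
        have hfA : f ∈ A ∧ f ≠ e₂ := by
          have : f ∈ ({f} : Finset E) := Finset.mem_singleton_self f
          rw [← hf, Finset.mem_filter, Finset.mem_erase] at this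
          exact ⟨this.1.2, this.1.1⟩
        have hoth : ∀ e ∈ A, e ≠ e₁ → e ≠ e₂ → (sw n σ s e = -1 ↔ e = f) := by
          intro e he h1 h2
          rw [← hsw2 s e h1]
          exact hf' e he h2
        have n11 : ¬ ((1 : ℤˣ) = -1) := by decide
        rcases Int.units_eq_one_or (sw n σ s e₁) with t1 | t1 <;>
          rcases Int.units_eq_one_or (sw n σ s e₂) with t2 | t2
        · exfalso
          have hfe : e₁ ≠ f := fun h => by
            have := hf1.2 h
            rw [t1, t2] at this
            exact absurd this (by decide)
          refine hone ⟨f, hfA.1, fun e he => ?_⟩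
          by_cases h1 : e = e₁
          · subst h1; simp [t1, hfe, n11]
          by_cases h2 : e = e₂
          · subst h2; simp [t2, hfA.2.symm, n11]
          exact hoth e he h1 h2
        · exfalso
          have hfe : e₁ = f := hf1.1 (by rw [t1, t2]; rfl)
          refine hone ⟨e₂, he₂, fun e he => ?_⟩
          by_cases h1 : e = e₁
          · subst h1; simp [t1, h12, n11]
          by_cases h2 : e = e₂
          · subst h2; simp [t2]
          rw [hoth e he h1 h2, ← hfe]
          simp [h1, h2]
        · exfalso
          have hfe : e₁ = f := hf1.1 (by rw [t1, t2]; rfl)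
          refine hone ⟨e₁, he₁, fun e he => ?_⟩
          by_cases h1 : e = e₁
          · subst h1; simp [t1]
          by_cases h2 : e = e₂
          · subst h2; simp [t2, h12.symm, n11]
          rw [hoth e he h1 h2, ← hfe]
        · refine direct σ hA hs hNT s h12 he₁ he₂ t1 t2 (f := f) ?_ i j hij
          intro e he ht
          by_cases h1 : e = e₁
          · exact Or.inl h1
          by_cases h2 : e = e₂
          · exact Or.inr (Or.inl h2)
          exact Or.inr (Or.inr ((hoth e he h1 h2).1 ht))
    · -- all edges are isolated loops
      push Not at hadj
      have hloop : ∀ e ∈ A, n e false = n e true := by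
        intro e he
        by_contra hc
        let s : V → ℤˣ := fun x => if x = n e false then -1 else 1
        have h1 := hA s
        rw [← Finset.mul_prod_erase A _ he, Finset.prod_eq_one (s := A.erase e)] at h1
        · simp [s, Ne.symm hc] at h1
        · intro x hx
          rw [Finset.mem_erase] at hx
          have := fun i => hadj x hx.2 e he hx.1 i false
          simp [s, this]
      have hev : ∀ e ∈ A, EV n {e} := by
        intro e he s
        rw [Finset.prod_singleton, hloop e he]
        exact Int.units_mul_self _
      have h3 := hNT.three hA hs 1
      have hlt : 1 < (A.filter fun e => sw n σ 1 e = -1).card := by omega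
      obtain ⟨x, hx, y, hy, hxy⟩ := Finset.one_lt_card.1 hlt
      simp only [Finset.mem_filter, sw, Pi.one_apply, mul_one] at hx hy
      exact ⟨{x}, {y}, by simpa using hx.1, by simpa using hy.1, by simpa using hxy,
        hev x hx.1, hev y hy.1, by simpa using hx.2, by simpa using hy.2⟩

end EulFlow


namespace EulFlow

section Final

variable {V E : Type} [Fintype V] [Fintype E] [DecidableEq V] [DecidableEq E]

theorem ev_univ (G : SignedGraph V E) (h : ∀ v : V, Even (G.valency v)) :
    EV G.ends Finset.univ := by
  intro s
  have h1 : ∏ e : E, (s (G.ends e false) * s (G.ends e true)) =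
      ∏ p : E × Bool, s (G.ends p.1 p.2) := by
    rw [Fintype.prod_prod_type]
    refine Finset.prod_congr rfl fun e _ => ?_
    rw [Fintype.prod_bool, mul_comm]
  rw [h1, ← Finset.prod_fiberwise (s := Finset.univ) (g := fun p : E × Bool => G.ends p.1 p.2)]
  refine Finset.prod_eq_one fun v _ => ?_
  have h2 : ∏ p ∈ Finset.univ.filter (fun p : E × Bool => G.ends p.1 p.2 = v),
      s (G.ends p.1 p.2) =
      ∏ p ∈ Finset.univ.filter (fun p : E × Bool => G.ends p.1 p.2 = v), s v := by
    refine Finset.prod_congr rfl fun p hp => ?_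
    rw [(Finset.mem_filter.1 hp).2]
  rw [h2, Finset.prod_const]
  have h3 := h v
  simp only [SignedGraph.valency, SignedGraph.valencyOn, Finset.mem_univ, true_and] at h3
  obtain ⟨k, hk⟩ := h3
  rw [hk, ← two_mul, pow_mul, Int.units_sq, one_pow]

theorem ut_univ (G : SignedGraph V E) (hG : G.Eulerian) :
    ∃ u, UT G.ends Finset.univ u u := by
  obtain ⟨⟨⟨u⟩, hc⟩, hv⟩ := hG
  refine ⟨u, ?_⟩
  obtain ⟨K, -, hK, hKc⟩ := exists_comp (ev_univ G hv) u
  have step : ∀ e i, (G.ends e i = u ∨ Touch G.ends K (G.ends e i)) → e ∈ K := by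
    intro e i h
    by_contra he
    have := hKc e (by simp [he]) i
    rcases h with h | h
    · exact this.1 h
    · exact this.2 h
  have all : ∀ w, w = u ∨ Touch G.ends K w := by
    intro w
    induction hc u w with
    | refl => exact Or.inl rfl
    | tail _ hab ih =>
      obtain ⟨e, -, i, rfl, rfl⟩ := hab
      exact Or.inr ⟨e, step e i ih, _, rfl⟩
  have : K = Finset.univ := by
    ext e
    simp [step e false (all _)]
  rwa [this] at hK

/-- Canonical orientation. -/
def canO (G : SignedGraph V E) : G.Orientation where
  dir e i := if i then decide (G.sign e = -1) else true
  compat e := by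
    rcases Int.units_eq_one_or (G.sign e) with h | h <;> simp [h]

theorem isFlow_can (G : SignedGraph V E) (φ : E → ℤ) (h : ∀ w, bd G.ends G.sign φ w = 0) :
    G.IsFlow (canO G) φ := by
  intro v
  rw [← h v, Finset.sum_filter, Fintype.sum_prod_type]
  unfold bd
  refine Finset.sum_congr rfl fun e _ => ?_
  rw [Fintype.sum_bool]
  simp only [canO, dl]
  rcases Int.units_eq_one_or (G.sign e) with h | h <;> simp [h] <;> split_ifs <;> ring

theorem nt_univ (G : SignedGraph V E) (hadm : G.FlowAdmissible) :
    NT G.ends G.sign Finset.univ := by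
  obtain ⟨O, φ, hφ, hnz⟩ := hadm
  intro s hcard
  obtain ⟨f, hf⟩ := Finset.card_eq_one.1 hcard
  have hf' : ∀ e, sw G.ends G.sign s e = -1 ↔ e = f := by
    intro e
    have := congrArg (fun S => e ∈ S) hf
    simpa using this
  have h0 : ∑ v : V, (s v : ℤ) *
      ∑ p ∈ Finset.univ.filter (fun p : E × Bool => G.ends p.1 p.2 = v),
        (if O.dir p.1 p.2 then φ p.1 else -φ p.1) = 0 := by
    refine Finset.sum_eq_zero fun v _ => ?_
    rw [hφ v, mul_zero]
  have h1 : ∑ v : V, (s v : ℤ) *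
      ∑ p ∈ Finset.univ.filter (fun p : E × Bool => G.ends p.1 p.2 = v),
        (if O.dir p.1 p.2 then φ p.1 else -φ p.1) =
      ∑ p : E × Bool, (s (G.ends p.1 p.2) : ℤ) *
        (if O.dir p.1 p.2 then φ p.1 else -φ p.1) := by
    rw [← Finset.sum_fiberwise (s := Finset.univ) (g := fun p : E × Bool => G.ends p.1 p.2)]
    refine Finset.sum_congr rfl fun v _ => ?_
    rw [Finset.mul_sum]
    refine Finset.sum_congr rfl fun p hp => ?_
    rw [(Finset.mem_filter.1 hp).2]
  rw [h1, Fintype.sum_prod_type] at h0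
  rw [Finset.sum_eq_single f] at h0
  · have hff := (hf' f).2 rfl
    have hc := O.compat f
    have hn := hnz f
    rw [Fintype.sum_bool] at h0
    simp only [sw] at hff
    rcases Int.units_eq_one_or (G.sign f) with a | a <;>
    rcases Int.units_eq_one_or (s (G.ends f false)) with b | b <;>
    rcases Int.units_eq_one_or (s (G.ends f true)) with c | c <;>
    rcases hx : O.dir f false <;> rcases hy : O.dir f true <;>
    simp [a, b, c, hx, hy] at hff hc h0 <;> omega
  · intro e _ he
    have hff : sw G.ends G.sign s e = 1 := units_of_ne fun h => he ((hf' e).1 h)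
    have hc := O.compat e
    rw [Fintype.sum_bool]
    simp only [sw] at hff
    rcases Int.units_eq_one_or (G.sign e) with a | a <;>
    rcases Int.units_eq_one_or (s (G.ends e false)) with b | b <;>
    rcases Int.units_eq_one_or (s (G.ends e true)) with c | c <;>
    rcases hx : O.dir e false <;> rcases hy : O.dir e true <;>
    simp [a, b, c, hx, hy] at hff hc ⊢
  · simp

theorem closed_flow (G : SignedGraph V E) {S : Finset E} {z : V} (h : UT G.ends S z z)
    (hs : ∏ e ∈ S, G.sign e = 1) :
    ∃ χ : E → ℤ, (∀ e ∉ S, χ e = 0) ∧ (∀ e ∈ S, χ e = 1 ∨ χ e = -1) ∧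
      ∀ w, bd G.ends G.sign χ w = 0 := by
  obtain ⟨χ, h0, h1, h2, -⟩ := Tr.flow G.sign h
  refine ⟨χ, h0, h1, fun w => ?_⟩
  rw [h2, hs]
  simp

theorem main (G : SignedGraph V E) (hG : G.Eulerian) (hadm : G.FlowAdmissible) :
    G.HasNZkFlow 4 := by
  obtain ⟨u, hu⟩ := ut_univ G hG
  have key : ∃ S T : Finset E, S ∪ T = Finset.univ ∧ (∃ z, UT G.ends S z z) ∧
      (∃ z, UT G.ends T z z) ∧ ∏ e ∈ S, G.sign e = 1 ∧ ∏ e ∈ T, G.sign e = 1 := by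
    rcases Int.units_eq_one_or (∏ e : E, G.sign e) with hs | hs
    · exact ⟨Finset.univ, Finset.univ, by simp, ⟨u, hu⟩, ⟨u, hu⟩, hs, hs⟩
    · obtain ⟨B, C, hB, hC, hd, hBe, hCe, hBs, hCs⟩ :=
        two_odd _ G.ends G.sign Finset.univ le_rfl (ev_univ G hG.2) hs (nt_univ G hadm)
      exact cover G.sign hu hs hB hC hd hBe hCe hBs hCs
  obtain ⟨S, T, hST, ⟨y, hS⟩, ⟨z, hT⟩, hSs, hTs⟩ := key
  obtain ⟨α, a0, a1, a2⟩ := closed_flow G hS hSs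
  obtain ⟨β, b0, b1, b2⟩ := closed_flow G hT hTs
  refine ⟨canO G, fun e => α e + 2 * β e, isFlow_can G _ fun w => ?_, fun e => ?_⟩
  · rw [bd_add G.sign α (fun e => 2 * β e) w, bd_smul, a2, b2]
    simp
  · have he : e ∈ S ∪ T := by rw [hST]; simp
    have ha := a0 e
    have ha' := a1 e
    have hb := b0 e
    have hb' := b1 e
    rw [Finset.mem_union] at he
    simp only [ne_eq, abs_lt]
    by_cases h1 : e ∈ S <;> by_cases h2 : e ∈ T <;> simp only [h1, h2, not_true_eq_false,
      not_false_eq_true, forall_const, or_self, false_implies] at ha ha' hb hb' he <;>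
      (push_cast; omega)

end Final

end EulFlow


open SignedGraph Finset in
/-- Every signed eulerian graph that admits a nowhere-zero
integer flow admits a nowhere-zero `4`-flow. -/
theorem stmt3 {V E : Type} [Fintype V] [Fintype E] [DecidableEq V]
    [DecidableEq E] (G : SignedGraph V E) (hG : G.Eulerian)
    (hadm : G.FlowAdmissible) :
    G.HasNZkFlow 4 := by
  exact EulFlow.main G hG hadm
end

section
/- For a connected unbalanced signed graph G, the following are equivalent: (a) G admits a nowhere-zero integer flow; (b) the edges of G can be covered by signed circuits; (c) for each edge e, the graph G - e contains no balanced connected component. -/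
open Finset

namespace SignedGraph

variable {V E : Type} [Fintype V] [Fintype E] [DecidableEq V] [DecidableEq E]

set_option linter.unusedSectionVars false

/-! ### Valencies and parity -/

theorem valencyOn_eq_sum (G : SignedGraph V E) (S : Finset E) (w : V) :
    G.valencyOn S w = ∑ g ∈ S, ((if G.ends g false = w then 1 else 0) +
      (if G.ends g true = w then 1 else 0)) := by
  unfold valencyOn
  rw [card_filter, Fintype.sum_prod_type]
  rw [← Finset.sum_filter_add_sum_filter_not univ (fun g => g ∈ S)]
  rw [Finset.sum_eq_zero (s := filter (fun g => ¬ g ∈ S) univ)]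
  · rw [add_zero, filter_mem_eq_inter, univ_inter]
    refine Finset.sum_congr rfl fun g hg => ?_
    rw [Fintype.sum_bool]
    simp [hg, add_comm]
  · intro g hg
    have : g ∉ S := by simpa using hg
    simp [this]

theorem valencyOn_insert (G : SignedGraph V E) {S : Finset E} {e : E} (h : e ∉ S) (w : V) :
    G.valencyOn (insert e S) w = G.valencyOn S w + ((if G.ends e false = w then 1 else 0) +
      (if G.ends e true = w then 1 else 0)) := by
  rw [valencyOn_eq_sum, valencyOn_eq_sum, Finset.sum_insert h, add_comm]

theorem mem_suppV {G : SignedGraph V E} {S : Finset E} {v : V} :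
    v ∈ G.suppV S ↔ ∃ e ∈ S, ∃ i : Bool, G.ends e i = v := by
  simp [suppV]

theorem ends_mem_suppV (G : SignedGraph V E) {S : Finset E} {e : E} (h : e ∈ S) (i : Bool) :
    G.ends e i ∈ G.suppV S := mem_suppV.2 ⟨e, h, i, rfl⟩

theorem mem_suppV_iff_valency {G : SignedGraph V E} {S : Finset E} {v : V} :
    v ∈ G.suppV S ↔ G.valencyOn S v ≠ 0 := by
  rw [mem_suppV, valencyOn, Ne, card_eq_zero, ← Ne, ← nonempty_iff_ne_empty]
  constructor
  · rintro ⟨e, he, i, hi⟩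
    exact ⟨(e, i), by simp [he, hi]⟩
  · rintro ⟨⟨e, i⟩, h⟩
    simp only [mem_filter, mem_univ, true_and] at h
    exact ⟨e, h.1, i, h.2⟩

theorem prod_ends (G : SignedGraph V E) (S : Finset E) (s : V → ℤˣ) :
    ∏ g ∈ S, (s (G.ends g false) * s (G.ends g true)) = ∏ v, s v ^ G.valencyOn S v := by
  induction S using Finset.induction_on with
  | empty => simp [valencyOn_eq_sum]
  | insert e S he ih =>
    rw [prod_insert he, ih]
    simp only [valencyOn_insert G he, pow_add, prod_mul_distrib]
    have key : ∀ a : V, ∏ v, s v ^ (if a = v then 1 else 0) = s a := by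
      intro a
      rw [prod_eq_single a] <;> simp +contextual [eq_comm]
    rw [key, key, mul_comm]

theorem prod_ends_circuit (G : SignedGraph V E) {S : Finset E} (hS : G.IsCircuit S)
    (s : V → ℤˣ) :
    ∏ g ∈ S, (s (G.ends g false) * s (G.ends g true)) = 1 := by
  rw [prod_ends]
  refine prod_eq_one fun v _ => ?_
  by_cases hv : v ∈ G.suppV S
  · rw [hS.2.2 v hv, sq, Int.units_mul_self]
  · rw [mem_suppV_iff_valency, not_not] at hv
    rw [hv, pow_zero]

theorem signOf_circuit (G : SignedGraph V E) {S : Finset E} (hS : G.IsCircuit S)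
    (s : V → ℤˣ) :
    G.signOf S = ∏ g ∈ S, (G.sign g * (s (G.ends g false) * s (G.ends g true))) := by
  rw [prod_mul_distrib, prod_ends_circuit G hS, mul_one, signOf]

theorem AdjOn.symm {G : SignedGraph V E} {S : Finset E} {u v : V} (h : G.AdjOn S u v) :
    G.AdjOn S v u := by
  obtain ⟨e, he, i, h1, h2⟩ := h
  exact ⟨e, he, !i, h2, by simpa using h1⟩

/-- Reachability by edges of `S`. -/
def Rch (G : SignedGraph V E) (S : Finset E) (u v : V) : Prop :=
  Relation.ReflTransGen (G.AdjOn S) u v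

theorem Rch.symm {G : SignedGraph V E} {S : Finset E} {u v : V} (h : G.Rch S u v) :
    G.Rch S v u := by
  induction h with
  | refl => exact Relation.ReflTransGen.refl
  | tail _ h ih => exact Relation.ReflTransGen.head h.symm ih

theorem Rch.trans {G : SignedGraph V E} {S : Finset E} {u v w : V} (h : G.Rch S u v)
    (h' : G.Rch S v w) : G.Rch S u w := Relation.ReflTransGen.trans h h'

theorem Rch.mono {G : SignedGraph V E} {S T : Finset E} (hST : S ⊆ T) {u v : V}
    (h : G.Rch S u v) : G.Rch T u v := by
  induction h with
  | refl => exact Relation.ReflTransGen.refl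
  | tail _ h ih =>
    obtain ⟨e, he, h⟩ := h
    exact Relation.ReflTransGen.tail ih ⟨e, hST he, h⟩

theorem Rch.refl (G : SignedGraph V E) (S : Finset E) (u : V) : G.Rch S u u :=
  Relation.ReflTransGen.refl

theorem Rch.edge (G : SignedGraph V E) {S : Finset E} {e : E} (he : e ∈ S) (i j : Bool) :
    G.Rch S (G.ends e i) (G.ends e j) := by
  by_cases hij : i = j
  · subst hij; exact Rch.refl _ _ _
  · refine Relation.ReflTransGen.single ⟨e, he, i, rfl, ?_⟩
    have : j = !i := by cases i <;> cases j <;> simp_all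
    rw [this]

theorem Rch.invariant {α : Type} {G : SignedGraph V E} {S : Finset E} (r : V → α)
    (hr : ∀ g ∈ S, r (G.ends g false) = r (G.ends g true)) {u v : V} (h : G.Rch S u v) :
    r u = r v := by
  induction h with
  | refl => rfl
  | tail _ h ih =>
    obtain ⟨e, he, i, rfl, rfl⟩ := h
    rw [ih]
    cases i
    · exact hr e he
    · exact (hr e he).symm

/-! ### Paths -/

/-- `P` is the edge set and `W` the vertex set of a (possibly trivial) path. -/
inductive SPath (G : SignedGraph V E) : Finset E → Finset V → V → V → Prop
  | nil (v : V) : SPath G ∅ {v} v v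
  | cons {P : Finset E} {W : Finset V} {v : V} (e : E) (i : Bool) :
      SPath G P W (G.ends e (!i)) v → G.ends e i ∉ W →
      SPath G (insert e P) (insert (G.ends e i) W) (G.ends e i) v

theorem SPath.left_mem {G : SignedGraph V E} {P : Finset E} {W : Finset V} {u v : V}
    (h : G.SPath P W u v) : u ∈ W := by
  cases h <;> simp

theorem SPath.right_mem {G : SignedGraph V E} {P : Finset E} {W : Finset V} {u v : V}
    (h : G.SPath P W u v) : v ∈ W := by
  induction h <;> simp_all

theorem SPath.ends_mem {G : SignedGraph V E} {P : Finset E} {W : Finset V} {u v : V}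
    (h : G.SPath P W u v) : ∀ g ∈ P, ∀ j, G.ends g j ∈ W := by
  induction h with
  | nil => simp
  | cons e i h hW ih =>
    intro g hg j
    rw [mem_insert] at hg
    rcases hg with rfl | hg
    · by_cases hij : j = i
      · subst hij; simp
      · have : j = !i := by cases i <;> cases j <;> simp_all
        rw [this]
        exact mem_insert_of_mem h.left_mem
    · exact mem_insert_of_mem (ih g hg j)

theorem SPath.noloop {G : SignedGraph V E} {P : Finset E} {W : Finset V} {u v : V}
    (h : G.SPath P W u v) : ∀ g ∈ P, G.ends g false ≠ G.ends g true := by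
  induction h with
  | nil => simp
  | cons e i h hW ih =>
    intro g hg
    rw [mem_insert] at hg
    rcases hg with rfl | hg
    · have := h.left_mem
      intro hh
      apply hW
      cases i
      · rw [hh]; exact this
      · rw [← hh]; exact this
    · exact ih g hg

theorem SPath.eq_of_closed {G : SignedGraph V E} {P : Finset E} {W : Finset V} {u : V}
    (h : G.SPath P W u u) : P = ∅ ∧ W = {u} := by
  have : ∀ u' v', G.SPath P W u' v' → u' = v' → P = ∅ ∧ W = {u'} := by
    intro u' v' h' huv
    cases h' with
    | nil => simp
    | cons e i h hW => exact absurd (huv ▸ h.right_mem) hW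
  exact this u u h rfl

theorem SPath.valency {G : SignedGraph V E} {P : Finset E} {W : Finset V} {u v : V}
    (h : G.SPath P W u v) (w : V) :
    G.valencyOn P w + ((if u = w then 1 else 0) + (if v = w then 1 else 0)) =
      if w ∈ W then 2 else 0 := by
  induction h with
  | nil v =>
    by_cases h : v = w
    · simp [valencyOn_eq_sum, h]
    · simp [valencyOn_eq_sum, h, Ne.symm h]
  | @cons P W v e i h hW ih =>
    have he : e ∉ P := fun he => hW (h.ends_mem e he i)
    rw [valencyOn_insert G he]
    have key : ((if G.ends e false = w then 1 else 0) + (if G.ends e true = w then 1 else 0) : ℕ)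
      = (if G.ends e i = w then 1 else 0) + (if G.ends e (!i) = w then 1 else 0) := by
      cases i
      · rfl
      · exact add_comm _ _
    rw [key]
    by_cases h1 : G.ends e i = w
    · have h2 : w ∉ W := h1 ▸ hW
      rw [if_neg h2] at ih
      simp only [h1, mem_insert, true_or, if_true]
      omega
    · have h2 : w ∈ insert (G.ends e i) W ↔ w ∈ W := by
        simp [mem_insert, Ne.symm h1]
      simp only [h2, h1, if_false]
      omega

theorem SPath.reach {G : SignedGraph V E} {P : Finset E} {W : Finset V} {u v : V}
    (h : G.SPath P W u v) : ∀ w ∈ W, G.Rch P u w := by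
  induction h with
  | nil v => intro w hw; rw [mem_singleton] at hw; subst hw; exact Rch.refl _ _ _
  | cons e i h hW ih =>
    intro w hw
    rw [mem_insert] at hw
    rcases hw with rfl | hw
    · exact Rch.refl _ _ _
    · exact (Rch.edge G (mem_insert_self _ _) i (!i)).trans
        ((ih w hw).mono (subset_insert _ _))

theorem SPath.append {G : SignedGraph V E} {P Q : Finset E} {W X : Finset V} {u v w : V}
    (h : G.SPath P W u v) (h' : G.SPath Q X v w) (hd : ∀ x ∈ W, x ∈ X → x = v) :
    G.SPath (P ∪ Q) (W ∪ X) u w := by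
  induction h with
  | nil v =>
    rw [empty_union, show ({v} : Finset V) ∪ X = X from by
      rw [union_eq_right]; simpa using h'.left_mem]
    exact h'
  | @cons P W v e i h hW ih =>
    rw [insert_union, insert_union]
    refine SPath.cons e i (ih h' fun x hx => hd x (mem_insert_of_mem hx)) ?_
    rw [mem_union, not_or]
    refine ⟨hW, fun hx => hW ?_⟩
    rw [hd _ (mem_insert_self _ _) hx]
    exact h.right_mem

theorem SPath.reverse {G : SignedGraph V E} {P : Finset E} {W : Finset V} {u v : V}
    (h : G.SPath P W u v) : G.SPath P W v u := by
  induction h with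
  | nil v => exact SPath.nil v
  | @cons P W v e i h hW ih =>
    have h1 : G.SPath (insert e ∅) (insert (G.ends e (!i)) {G.ends e i}) (G.ends e (!i))
        (G.ends e i) := by
      refine SPath.cons e (!i) ?_ ?_
      · rw [Bool.not_not]; exact SPath.nil _
      · intro hh
        rw [mem_singleton] at hh
        exact hW (hh ▸ h.left_mem)
    have h2 := ih.append h1 ?_
    · convert h2 using 1
      · ext g; simp
      · ext g; simp only [mem_insert, mem_union, mem_singleton]
        have := h.left_mem
        constructor
        · tauto
        · rintro (h | rfl | h)
          · exact Or.inr h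
          · exact Or.inr this
          · exact Or.inl h
    · intro x hx hx'
      rw [mem_insert, mem_singleton] at hx'
      rcases hx' with rfl | rfl
      · rfl
      · exact absurd hx hW

/-- Split a path at the first vertex in a given set. -/
theorem SPath.firstHit {G : SignedGraph V E} {P : Finset E} {W : Finset V} {u v : V}
    (h : G.SPath P W u v) (X : Finset V) (hX : ∃ x ∈ W, x ∈ X) :
    ∃ x ∈ X, ∃ P₁ P₂ W₁ W₂, G.SPath P₁ W₁ u x ∧ G.SPath P₂ W₂ x v ∧
      P = P₁ ∪ P₂ ∧ W = W₁ ∪ W₂ ∧ (∀ y ∈ W₁, y ∈ W₂ → y = x) ∧ (∀ y ∈ W₁, y ∈ X → y = x) := by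
  induction h with
  | nil v =>
    obtain ⟨x, hx, hxX⟩ := hX
    rw [mem_singleton] at hx
    subst hx
    exact ⟨x, hxX, ∅, ∅, {x}, {x}, SPath.nil x, SPath.nil x, by simp, by simp, by simp, by simp⟩
  | @cons P W v e i h hW ih =>
    by_cases hu : G.ends e i ∈ X
    · refine ⟨_, hu, ∅, insert e P, {G.ends e i}, insert (G.ends e i) W, SPath.nil _,
        SPath.cons e i h hW, by simp, by simp, by simp, by simp⟩
    · obtain ⟨x, hx, P₁, P₂, W₁, W₂, h1, h2, rfl, rfl, h3, h4⟩ := ih (by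
        obtain ⟨x, hx, hxX⟩ := hX
        rw [mem_insert] at hx
        rcases hx with rfl | hx
        · exact absurd hxX hu
        · exact ⟨x, hx, hxX⟩)
      rw [mem_union, not_or] at hW
      refine ⟨x, hx, insert e P₁, P₂, insert (G.ends e i) W₁, W₂, SPath.cons e i h1 hW.1, h2,
        by rw [insert_union], by rw [insert_union], ?_, ?_⟩
      · intro y hy hy2
        rw [mem_insert] at hy
        rcases hy with rfl | hy
        · exact absurd hy2 hW.2
        · exact h3 y hy hy2
      · intro y hy hy2
        rw [mem_insert] at hy
        rcases hy with rfl | hy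
        · exact absurd hy2 hu
        · exact h4 y hy hy2

/-- Split a path at a vertex. -/
theorem SPath.split {G : SignedGraph V E} {P : Finset E} {W : Finset V} {u v x : V}
    (h : G.SPath P W u v) (hx : x ∈ W) :
    ∃ P₁ P₂ W₁ W₂, G.SPath P₁ W₁ u x ∧ G.SPath P₂ W₂ x v ∧
      P = P₁ ∪ P₂ ∧ W = W₁ ∪ W₂ ∧ (∀ y ∈ W₁, y ∈ W₂ → y = x) := by
  obtain ⟨y, hy, P₁, P₂, W₁, W₂, h1, h2, h3, h4, h5, -⟩ := h.firstHit {x} ⟨x, hx, by simp⟩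
  rw [mem_singleton] at hy
  subst hy
  exact ⟨P₁, P₂, W₁, W₂, h1, h2, h3, h4, h5⟩

theorem Rch.exists_path {G : SignedGraph V E} {S : Finset E} {u v : V} (h : G.Rch S u v) :
    ∃ P W, P ⊆ S ∧ G.SPath P W u v := by
  induction h using Relation.ReflTransGen.head_induction_on with
  | refl => exact ⟨∅, {v}, by simp, SPath.nil v⟩
  | head h _ ih =>
    obtain ⟨e, he, i, rfl, rfl⟩ := h
    obtain ⟨P, W, hP, hW⟩ := ih
    by_cases hu : G.ends e i ∈ W
    · obtain ⟨P₁, P₂, W₁, W₂, h1, h2, rfl, -, -⟩ := hW.split hu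
      exact ⟨P₂, W₂, subset_union_right.trans hP, h2⟩
    · exact ⟨_, _, insert_subset he hP, SPath.cons e i hW hu⟩

theorem SPath.isPathOn {G : SignedGraph V E} {P : Finset E} {W : Finset V} {u v : V}
    (h : G.SPath P W u v) (huv : u ≠ v) : G.IsPathOn P u v ∧ G.suppV P = W := by
  have hs : G.suppV P = W := by
    ext w
    rw [mem_suppV_iff_valency]
    have h1 := h.valency w
    have hl := h.left_mem
    have hr := h.right_mem
    split_ifs at h1 <;> first | omega | (subst_vars; simp_all)
  refine ⟨⟨huv, ?_, hs ▸ h.left_mem, hs ▸ h.right_mem, ?_, ?_, ?_⟩, hs⟩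
  · intro a ha b hb
    exact (h.reach a (hs ▸ ha)).symm.trans (h.reach b (hs ▸ hb))
  · have h1 := h.valency u
    simp [h.left_mem, huv.symm] at h1
    omega
  · have h1 := h.valency v
    simp [h.right_mem, huv] at h1
    omega
  · intro w hw h1 h2
    have h3 := h.valency w
    simpa [hs ▸ hw, h1.symm, h2.symm] using h3

theorem SPath.circuit {G : SignedGraph V E} {P : Finset E} {W : Finset V} {e : E} {i : Bool}
    (h : G.SPath P W (G.ends e i) (G.ends e (!i))) (he : e ∉ P) :
    G.IsCircuit (insert e P) ∧ G.suppV (insert e P) = W := by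
  have hv : ∀ w, G.valencyOn (insert e P) w = if w ∈ W then 2 else 0 := by
    intro w
    rw [valencyOn_insert G he, ← h.valency w]
    cases i
    · rfl
    · rw [add_comm (if G.ends e false = w then 1 else 0)]; rfl
  have hs : G.suppV (insert e P) = W := by
    ext w
    rw [mem_suppV_iff_valency, hv]
    simp
  refine ⟨⟨insert_nonempty _ _, ?_, ?_⟩, hs⟩
  · intro a ha b hb
    exact ((h.reach a (hs ▸ ha)).symm.trans (h.reach b (hs ▸ hb))).mono (subset_insert _ _)
  · intro w hw
    rw [hv, if_pos (hs ▸ hw)]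

/-! ### The main combinatorial construction -/

theorem reroute {G : SignedGraph V E} {f : E} {i : Bool} {u v x y : V}
    {Q₁ Q₂ A B : Finset E} {W₁ W₂ WA WB : Finset V}
    (h1 : G.SPath Q₁ W₁ u x) (h2 : G.SPath Q₂ W₂ x v)
    (h12 : ∀ z ∈ W₁, z ∈ W₂ → z = x) (hy : y ∈ W₂) (hxy : y ≠ x)
    (hA : G.SPath A WA (G.ends f i) x) (hB : G.SPath B WB (G.ends f (!i)) y)
    (hAW : ∀ z ∈ WA, z ∈ W₁ ∪ W₂ → z = x) (hBW : ∀ z ∈ WB, z ∈ W₁ ∪ W₂ → z = y)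
    (hAB : ∀ z ∈ WA, z ∉ WB) :
    ∃ R W, G.SPath R W u v ∧ R ⊆ insert f (Q₁ ∪ Q₂ ∪ A ∪ B) ∧ f ∈ R := by
  obtain ⟨P₁, P₂, X₁, X₂, h3, h4, rfl, rfl, h5⟩ := h2.split hy
  have hx : x ∉ X₂ := fun hx => hxy (h5 x h3.left_mem hx).symm
  have hy1 : y ∉ W₁ := fun h => hxy (h12 y h hy)
  -- the part from `f` over `B` to `v`
  have k1 : G.SPath (B ∪ P₂) (WB ∪ X₂) (G.ends f (!i)) v := by
    refine hB.append h4 fun z hz hz' => hBW z hz ?_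
    simp [hz']
  have hfa : G.ends f i ∉ WB ∪ X₂ := by
    rw [mem_union, not_or]
    refine ⟨hAB _ hA.left_mem, fun h => hx ?_⟩
    rwa [← hAW _ hA.left_mem (by simp [h])]
  have k2 := SPath.cons f i k1 hfa
  have k3 : G.SPath (A ∪ insert f (B ∪ P₂)) (WA ∪ insert (G.ends f i) (WB ∪ X₂)) x v := by
    refine hA.reverse.append k2 fun z hz hz' => ?_
    rw [mem_insert, mem_union] at hz'
    rcases hz' with h | h | h
    · exact h
    · exact absurd h (hAB z hz)
    · have := hAW z hz (by simp [h])
      subst this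
      exact absurd h hx
  have k4 := h1.append k3 (fun z hz hz' => by
    rw [mem_union, mem_insert, mem_union] at hz'
    rcases hz' with h | h | h | h
    · exact hAW z h (by simp [hz])
    · subst h
      exact hAW _ hA.left_mem (by simp [hz])
    · have := hBW z h (by simp [hz])
      subst this
      exact absurd hz hy1
    · exact h12 z hz (by simp [h]))
  refine ⟨_, _, k4, ?_, by simp⟩
  intro g
  simp only [mem_union, mem_insert]
  tauto

theorem unbalanced_of_one {G : SignedGraph V E} {K : Finset E} {s : V → ℤˣ}
    (hK : ∀ g ∈ K, G.sign g * (s (G.ends g false) * s (G.ends g true)) = 1)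
    {e : E} (he : G.sign e * (s (G.ends e false) * s (G.ends e true)) = -1) {P : Finset E}
    (hP : P ⊆ K) (heP : e ∉ P) (hC : G.IsCircuit (insert e P)) :
    G.IsUnbalancedCircuit (insert e P) := by
  refine ⟨hC, ?_⟩
  rw [signOf_circuit G hC s, prod_insert heP, he, prod_eq_one fun g hg => hK g (hP hg), mul_one]

set_option maxHeartbeats 2000000 in
theorem exists_signedCircuit {G : SignedGraph V E} {K : Finset E} {s : V → ℤˣ}
    (hK : ∀ g ∈ K, G.sign g * (s (G.ends g false) * s (G.ends g true)) = 1)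
    {e f : E} (heK : e ∉ K) (hfK : f ∉ K) (hef : e ≠ f)
    (he : G.sign e * (s (G.ends e false) * s (G.ends e true)) = -1)
    (hf : G.sign f * (s (G.ends f false) * s (G.ends f true)) = -1)
    (ce : G.Rch K (G.ends e false) (G.ends e true))
    (cf : G.Rch K (G.ends f false) (G.ends f true))
    (cef : G.Rch K (G.ends e false) (G.ends f false)) :
    ∃ T, T ⊆ insert e (insert f K) ∧ G.IsSignedCircuit T ∧ e ∈ T ∧ f ∈ T := by
  obtain ⟨Q, W, hQK, hQ⟩ := ce.exists_path
  obtain ⟨P, X, hPK, hP⟩ := cf.exists_path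
  have heQ : e ∉ Q := fun h => heK (hQK h)
  have hfP : f ∉ P := fun h => hfK (hPK h)
  obtain ⟨cQ, sQ⟩ := SPath.circuit (i := false) hQ heQ
  obtain ⟨cP, sP⟩ := SPath.circuit (i := false) hP hfP
  have uQ := unbalanced_of_one hK he hQK heQ cQ
  have uP := unbalanced_of_one hK hf hPK hfP cP
  -- a balanced circuit from a path through `f`
  have fin : ∀ R W', G.SPath R W' (G.ends e false) (G.ends e true) → R ⊆ insert f K → f ∈ R →
      ∃ T, T ⊆ insert e (insert f K) ∧ G.IsSignedCircuit T ∧ e ∈ T ∧ f ∈ T := by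
    intro R W' hR hRK hfR
    have heR : e ∉ R := fun h => by
      have := hRK h
      rw [mem_insert] at this
      tauto
    obtain ⟨cR, -⟩ := SPath.circuit (i := false) hR heR
    refine ⟨insert e R, insert_subset_insert _ hRK, Or.inl ⟨cR, ?_⟩, by simp, by simp [hfR]⟩
    rw [signOf_circuit G cR s, prod_insert heR, ← insert_erase hfR, prod_insert (by simp), he, hf,
      prod_eq_one]
    · rfl
    · intro g hg
      rw [mem_erase] at hg
      have := hRK hg.2
      rw [mem_insert] at this
      exact hK g (this.resolve_left hg.1)
  by_cases hd : ∃ x ∈ X, x ∈ W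
  · obtain ⟨x, hxW, A, P', XA, X', hA, hP', rfl, rfl, hAP', hAW⟩ := hP.firstHit W hd
    obtain ⟨y, hyW, B, P'', XB, X'', hB, hP'', rfl, rfl, hBP, hBW⟩ :=
      hP'.reverse.firstHit W ⟨x, hP'.left_mem, hxW⟩
    by_cases hxy : y = x
    · -- the two circuits meet in a single vertex
      subst hxy
      obtain ⟨rfl, rfl⟩ := hP''.eq_of_closed
      refine ⟨_, ?_, Or.inr (Or.inl ⟨_, _, y, uQ, uP, ?_, ?_, rfl⟩), by simp, by simp⟩
      · intro g
        have h1 := @hQK g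
        have h2 := @hPK g
        simp only [mem_union, mem_insert] at h1 h2 ⊢
        tauto
      · rw [disjoint_left]
        intro g hg hg'
        rw [mem_insert] at hg hg'
        have hmem : ∀ z, z ∈ W → z ∈ XA ∪ (XB ∪ {y}) → z = y := by
          intro z hz hz'
          simp only [mem_union, mem_singleton] at hz'
          rcases hz' with h | h | h
          · exact hAW z h hz
          · exact hBW z h hz
          · exact h
        have hl : G.ends g false = G.ends g true := by
          have key : ∀ j, G.ends g j = y := by
            intro j
            refine hmem _ ?_ ?_
            · rw [← sQ]; exact ends_mem_suppV G (mem_insert.2 hg) j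
            · rw [← sP]; exact ends_mem_suppV G (mem_insert.2 hg') j
          rw [key, key]
        rcases hg with rfl | hg
        · rcases hg' with h | h
          · exact hef h
          · exact hP.noloop _ h hl
        · exact hQ.noloop _ hg hl
      · rw [sQ, sP]
        ext z
        simp only [mem_inter, mem_union, mem_singleton]
        constructor
        · rintro ⟨hz, h | h | h⟩
          · exact hAW z h hz
          · exact hBW z h hz
          · exact h
        · rintro rfl
          exact ⟨hyW, Or.inr (Or.inr rfl)⟩
    · -- there is a balanced circuit through both edges
      have hAB : ∀ z ∈ XA, z ∉ XB := by
        intro z hz hz'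
        have h1 := hAP' z hz (by simp [hz'])
        subst h1
        exact hxy (hBW z hz' hxW).symm
      obtain ⟨Q₁, Q₂, W₁, W₂, h1, h2, rfl, rfl, h12⟩ := hQ.split hxW
      have hsub : insert f (Q₁ ∪ Q₂ ∪ A ∪ B) ⊆ insert f K := by
        apply insert_subset_insert
        intro g
        have h1 := @hQK g
        have h2 := @hPK g
        simp only [mem_union] at h1 h2 ⊢
        tauto
      rw [mem_union] at hyW
      rcases hyW with hy | hy
      · have e1 := h2.reverse
        obtain ⟨R, W', hR, hRK, hfR⟩ := reroute (i := false) h2.reverse h1.reverse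
          (fun z hz hz' => h12 z hz' hz) hy hxy hA hB
          (fun z hz hz' => hAW z hz (by rwa [union_comm] at hz'))
          (fun z hz hz' => hBW z hz (by rwa [union_comm] at hz')) hAB
        refine fin R W' hR.reverse (hRK.trans ?_) hfR
        rwa [union_comm Q₂ Q₁]
      · obtain ⟨R, W', hR, hRK, hfR⟩ := reroute (i := false) h1 h2 h12 hy hxy hA hB hAW hBW hAB
        exact fin R W' hR (hRK.trans hsub) hfR
  · -- the two circuits are disjoint
    obtain ⟨Z₀, Y₀, hZ₀K, hZ₀⟩ := cef.exists_path
    obtain ⟨y, hyX, Z₁, _, Y₁, _, hZ₁, -, rfl, -, -, hZ₁X⟩ :=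
      hZ₀.firstHit X ⟨_, hZ₀.right_mem, hP.left_mem⟩
    obtain ⟨x, hxW, Z, _, Y, _, hZ, -, rfl, rfl, -, hZW⟩ :=
      hZ₁.reverse.firstHit W ⟨_, hZ₁.left_mem, hQ.left_mem⟩
    have hne : x ≠ y := by
      rintro rfl
      exact hd ⟨x, hyX, hxW⟩
    obtain ⟨pZ, sZ⟩ := hZ.reverse.isPathOn hne
    have hZK : Z ⊆ K := fun g hg => hZ₀K (by simp [hg])
    refine ⟨_, ?_, Or.inr (Or.inr ⟨_, _, Z, x, y, uQ, uP, ?_, pZ, ?_, ?_, ?_, ?_, ?_, rfl⟩),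
      by simp, by simp⟩
    · intro g
      have h1 := @hQK g
      have h2 := @hPK g
      have h3 := @hZK g
      simp only [mem_union, mem_insert] at h1 h2 ⊢
      tauto
    · rw [sQ, sP, disjoint_left]
      intro z hz hz'
      exact hd ⟨z, hz', hz⟩
    · rwa [sQ]
    · rwa [sP]
    · rw [sZ, sQ]
      ext z
      simp only [mem_inter, mem_singleton]
      constructor
      · rintro ⟨h, h'⟩
        exact hZW z h h'
      · rintro rfl
        exact ⟨hZ.right_mem, hxW⟩
    · rw [sZ, sP]
      ext z
      simp only [mem_inter, mem_singleton]
      constructor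
      · rintro ⟨h, h'⟩
        exact hZ₁X z (by simp [h]) h'
      · rintro rfl
        exact ⟨hZ.left_mem, hyX⟩
    · rw [disjoint_left]
      intro g hg hg'
      apply hZ.noloop g hg
      rw [mem_union] at hg'
      rcases hg' with h | h
      · have key : ∀ j, G.ends g j = x := fun j =>
          hZW _ (hZ.ends_mem g hg j) (by rw [← sQ]; exact ends_mem_suppV G h j)
        rw [key, key]
      · have key : ∀ j, G.ends g j = y := fun j =>
          hZ₁X _ (by simp [hZ.ends_mem g hg j]) (by rw [← sP]; exact ends_mem_suppV G h j)
        rw [key, key]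

/-! ### Potentials -/

/-- The potential `s` is compatible with the edge `g`. -/
def Cons (G : SignedGraph V E) (s : V → ℚ) (g : E) : Prop :=
  s (G.ends g false) = ((G.sign g : ℤ) : ℚ) * s (G.ends g true)

/-- No edge is the support of a coboundary. -/
def PropD (G : SignedGraph V E) : Prop :=
  ∀ (s : V → ℚ) (e : E), (∀ g, g ≠ e → G.Cons s g) → G.Cons s e

/-- The sign of a potential. -/
def sg (s : V → ℚ) (v : V) : ℤˣ := if s v < 0 then -1 else 1

theorem Cons.abs {G : SignedGraph V E} {s : V → ℚ} {g : E} (h : G.Cons s g) :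
    |s (G.ends g false)| = |s (G.ends g true)| := by
  unfold Cons at h
  rw [h, abs_mul]
  rcases Int.units_eq_one_or (G.sign g) with h1 | h1 <;> simp [h1]

theorem Cons.sg_mul {G : SignedGraph V E} {s : V → ℚ} {g : E} (h : G.Cons s g)
    (h0 : s (G.ends g true) ≠ 0) :
    G.sign g * (sg s (G.ends g false) * sg s (G.ends g true)) = 1 := by
  unfold Cons at h
  rcases Int.units_eq_one_or (G.sign g) with h1 | h1
  · rw [h1] at h ⊢
    simp at h
    simp [sg, h]
    split_ifs <;> rfl
  · rw [h1] at h ⊢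
    simp at h
    rcases lt_or_gt_of_ne h0 with h2 | h2
    · have : ¬ s (G.ends g false) < 0 := by linarith
      simp [sg, h2, this]
    · have h3 : ¬ s (G.ends g true) < 0 := by linarith
      have : s (G.ends g false) < 0 := by linarith
      simp [sg, h3, this]

theorem cons_of_sg {G : SignedGraph V E} {s : V → ℚ} {g : E}
    (h : |s (G.ends g false)| = |s (G.ends g true)|)
    (h1 : G.sign g * (sg s (G.ends g false) * sg s (G.ends g true)) = 1) : G.Cons s g := by
  unfold Cons
  have key : ∀ v, s v = ((sg s v : ℤ) : ℚ) * |s v| := by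
    intro v
    unfold sg
    split_ifs with h
    · simp [abs_of_neg h]
    · simp [abs_of_nonneg (not_lt.1 h)]
  have h2 : sg s (G.ends g false) = G.sign g * sg s (G.ends g true) := by
    rcases Int.units_eq_one_or (G.sign g) with a | a <;>
    rcases Int.units_eq_one_or (sg s (G.ends g false)) with b | b <;>
    rcases Int.units_eq_one_or (sg s (G.ends g true)) with c | c <;>
    simp [a, b, c] at h1 ⊢
  rw [key (G.ends g false), h2, h]
  conv_rhs => rw [key (G.ends g true)]
  push_cast
  ring

theorem cons_of_zero {G : SignedGraph V E} {s : V → ℚ} {g : E}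
    (h : ∀ i, s (G.ends g i) = 0) : G.Cons s g := by
  unfold Cons
  rw [h, h, mul_zero]

theorem cons_unit {G : SignedGraph V E} {s : V → ℤˣ} {g : E} {t : V → ℚ}
    (ht : ∀ i, t (G.ends g i) = ((s (G.ends g i) : ℤ) : ℚ)) :
    G.Cons t g ↔ G.sign g * (s (G.ends g false) * s (G.ends g true)) = 1 := by
  unfold Cons
  rw [ht, ht]
  rcases Int.units_eq_one_or (G.sign g) with a | a <;>
  rcases Int.units_eq_one_or (s (G.ends g false)) with b | b <;>
  rcases Int.units_eq_one_or (s (G.ends g true)) with c | c <;>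
  simp [a, b, c] <;> norm_num

theorem zero_prop {G : SignedGraph V E} {S : Finset E} (hS : G.ConnOn S) {s : V → ℚ}
    (hr : ∀ g ∈ S, |s (G.ends g false)| = |s (G.ends g true)|) {v : V} (hv : v ∈ G.suppV S)
    (h0 : s v = 0) : ∀ w ∈ G.suppV S, s w = 0 := by
  intro w hw
  have := Rch.invariant (fun x => |s x|) hr (hS v hv w hw)
  simpa [h0, eq_comm] using this

theorem unbalanced_zero {G : SignedGraph V E} {C : Finset E} (hC : G.IsUnbalancedCircuit C)
    {s : V → ℚ} (hs : ∀ g ∈ C, G.Cons s g) : ∀ w ∈ G.suppV C, s w = 0 := by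
  intro w hw
  by_contra h0
  have hne : ∀ v ∈ G.suppV C, s v ≠ 0 := fun v hv hv0 =>
    h0 (zero_prop hC.1.2.1 (fun g hg => (hs g hg).abs) hv hv0 w hw)
  have h1 := signOf_circuit G hC.1 (sg s)
  rw [hC.2, prod_eq_one fun g hg => (hs g hg).sg_mul (hne _ (ends_mem_suppV G hg true))] at h1
  exact absurd h1 (by decide)

theorem level_parity {G : SignedGraph V E} {S : Finset E} {f : E} (hf : f ∈ S) {r : V → ℚ}
    (hr : ∀ g ∈ S, g ≠ f → r (G.ends g false) = r (G.ends g true)) (c : ℚ)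
    (hc : ∀ v, r v = c → Even (G.valencyOn S v)) :
    r (G.ends f false) = c ↔ r (G.ends f true) = c := by
  have h := prod_ends G S (fun v => if r v = c then -1 else 1)
  rw [prod_eq_one (s := univ), prod_eq_single f] at h
  · by_cases h1 : r (G.ends f false) = c <;> by_cases h2 : r (G.ends f true) = c <;>
      simp [h1, h2] at h ⊢
  · intro g hg hgf
    rw [hr g hg hgf]
    split_ifs <;> rfl
  · exact fun h => absurd hf h
  · intro v _
    split_ifs with hv
    · exact (hc v hv).neg_one_pow
    · exact one_pow _

theorem circuit_abs {G : SignedGraph V E} {S : Finset E} (hS : G.IsCircuit S) {f : E}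
    {r : V → ℚ} (hr : ∀ g ∈ S, g ≠ f → r (G.ends g false) = r (G.ends g true)) :
    ∀ g ∈ S, r (G.ends g false) = r (G.ends g true) := by
  intro g hg
  by_cases hgf : g = f
  · subst hgf
    refine ((level_parity hg hr (r (G.ends g false)) fun v _ => ?_).1 rfl).symm
    by_cases hv : v ∈ G.suppV S
    · rw [hS.2.2 v hv]; exact even_two
    · rw [mem_suppV_iff_valency, not_not] at hv
      rw [hv]; exact Even.zero
  · exact hr g hg hgf

theorem cons_of_balancedCircuit {G : SignedGraph V E} {T : Finset E}
    (hT : G.IsBalancedCircuit T) {e : E} (he : e ∈ T) {s : V → ℚ}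
    (hs : ∀ g, g ≠ e → G.Cons s g) : G.Cons s e := by
  have hr := circuit_abs hT.1 (f := e) (r := fun v => |s v|) (fun g _ hge => (hs g hge).abs)
  by_cases h0 : s (G.ends e false) = 0
  · have := zero_prop hT.1.2.1 hr (ends_mem_suppV G he false) h0
    exact cons_of_zero fun i => this _ (ends_mem_suppV G he i)
  · have hne : ∀ v ∈ G.suppV T, s v ≠ 0 := fun v hv hv0 =>
      h0 (zero_prop hT.1.2.1 hr hv hv0 _ (ends_mem_suppV G he false))
    have h1 := signOf_circuit G hT.1 (sg s)
    rw [hT.2, prod_eq_single e] at h1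
    · exact cons_of_sg (hr e he) h1.symm
    · intro g hg hge
      exact (hs g hge).sg_mul (hne _ (ends_mem_suppV G hg true))
    · exact fun h => absurd he h

theorem propD_of_cover {G : SignedGraph V E}
    (hb : ∀ e : E, ∃ T : Finset E, G.IsSignedCircuit T ∧ e ∈ T) : G.PropD := by
  intro s e hs
  obtain ⟨T, hT, he⟩ := hb e
  rcases hT with hT | ⟨S₁, S₂, v, h1, h2, hd, hv, rfl⟩ |
    ⟨S₁, S₂, P, u, v, h1, h2, hd, hP, hu, hv, hPu, hPv, hdP, rfl⟩
  · exact cons_of_balancedCircuit hT he hs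
  · have hv' : v ∈ G.suppV S₁ ∧ v ∈ G.suppV S₂ := by
      rw [← mem_inter, hv]; simp
    have key : ∀ A B : Finset E, G.IsUnbalancedCircuit A → G.IsUnbalancedCircuit B →
        v ∈ G.suppV A → v ∈ G.suppV B → e ∈ A → e ∉ B → G.Cons s e := by
      intro A B hA hB hvA hvB heA heB
      have h0 := unbalanced_zero hB (s := s) (fun g hg => hs g (by rintro rfl; exact heB hg))
      have := zero_prop hA.1.2.1 (circuit_abs hA.1 (f := e) (r := fun v => |s v|)
        (fun g _ hge => (hs g hge).abs)) hvA (h0 v hvB)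
      exact cons_of_zero fun i => this _ (ends_mem_suppV G heA i)
    rw [disjoint_left] at hd
    rw [mem_union] at he
    rcases he with he | he
    · exact key S₁ S₂ h1 h2 hv'.1 hv'.2 he (hd he)
    · exact key S₂ S₁ h2 h1 hv'.2 hv'.1 he (fun h => hd h he)
  · have hvP : v ∈ G.suppV P := hP.2.2.2.1
    have huP : u ∈ G.suppV P := hP.2.2.1
    have key : ∀ (A B : Finset E) (x y : V), G.IsUnbalancedCircuit A →
        G.IsUnbalancedCircuit B →
        x ∈ G.suppV A → y ∈ G.suppV B → x ∈ G.suppV P → y ∈ G.suppV P →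
        e ∈ A → e ∉ B → e ∉ P → G.Cons s e := by
      intro A B x y hA hB hx hy hx' hy' heA heB heP
      have h0 := unbalanced_zero hB (s := s) (fun g hg => hs g (by rintro rfl; exact heB hg))
      have h1 := zero_prop hP.2.1 (fun g hg => (hs g (by rintro rfl; exact heP hg)).abs)
        hy' (h0 y hy) x hx'
      have := zero_prop hA.1.2.1 (circuit_abs hA.1 (f := e) (r := fun v => |s v|)
        (fun g _ hge => (hs g hge).abs)) hx h1
      exact cons_of_zero fun i => this _ (ends_mem_suppV G heA i)
    have hd12 : ∀ g, g ∈ S₁ → g ∈ S₂ → False := fun g hg hg' =>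
      disjoint_left.1 hd (ends_mem_suppV G hg true) (ends_mem_suppV G hg' true)
    rw [disjoint_left] at hdP
    rw [mem_union, mem_union] at he
    rcases he with (he | he) | he
    · exact key S₁ S₂ u v h1 h2 hu hv huP hvP he (fun h => hd12 e he h)
        (fun h => hdP h (mem_union_left _ he))
    · exact key S₂ S₁ v u h2 h1 hv hu hvP huP he (fun h => hd12 e h he)
        (fun h => hdP h (mem_union_right _ he))
    · have hne : ∀ g ∈ S₁ ∪ S₂, g ≠ e := by
        rintro g hg rfl
        exact hdP he hg
      have hu0 := unbalanced_zero h1 (s := s)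
        (fun g hg => hs g (hne g (mem_union_left _ hg))) u hu
      have hv0 := unbalanced_zero h2 (s := s)
        (fun g hg => hs g (hne g (mem_union_right _ hg))) v hv
      have hpar : ∀ c : ℚ, c ≠ 0 → (|s (G.ends e false)| = c ↔ |s (G.ends e true)| = c) := by
        intro c hc
        refine level_parity (r := fun v => |s v|) he (fun g _ hge => (hs g hge).abs) c ?_
        intro w hw
        by_cases hwP : w ∈ G.suppV P
        · rw [hP.2.2.2.2.2.2 w hwP]
          · exact even_two
          · rintro rfl; exact hc (by simpa [hu0] using hw.symm)
          · rintro rfl; exact hc (by simpa [hv0] using hw.symm)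
        · rw [mem_suppV_iff_valency, not_not] at hwP
          rw [hwP]; exact Even.zero
      have habs : |s (G.ends e false)| = |s (G.ends e true)| := by
        by_cases h0 : |s (G.ends e false)| = 0
        · by_cases h0' : |s (G.ends e true)| = 0
          · rw [h0, h0']
          · exact (hpar _ h0').2 rfl
        · exact ((hpar _ h0).1 rfl).symm
      have := zero_prop hP.2.1 (s := s) (fun g hg => by
        by_cases hge : g = e
        · subst hge; exact habs
        · exact (hs g hge).abs) huP hu0
      exact cons_of_zero fun i => this _ (ends_mem_suppV G he i)

theorem propD_of_noBalanced {G : SignedGraph V E}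
    (hc : ∀ f : E, G.NoBalancedComponentAvoiding f) : G.PropD := by
  intro s e hs
  refine cons_of_zero fun i => ?_
  obtain ⟨S, hS, hneg, heS, hr⟩ := hc e (G.ends e i)
  have h0 := unbalanced_zero (s := s) ⟨hS, hneg⟩ (fun g hg => hs g (by rintro rfl; exact heS hg))
  obtain ⟨g, hg⟩ := hS.1
  have hw := ends_mem_suppV G hg true
  have h1 := Rch.invariant (fun x => |s x|) (fun g hg => (hs g (ne_of_mem_erase hg)).abs)
    (hr _ hw)
  simp only [h0 _ hw, abs_zero] at h1
  exact abs_eq_zero.1 h1.symm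

theorem exists_flip {G : SignedGraph V E} {K : Finset E} {s : V → ℤˣ}
    (hK : ∀ g ∈ K, G.sign g * (s (G.ends g false) * s (G.ends g true)) = 1) {e : E}
    (he : ¬ G.Rch K (G.ends e false) (G.ends e true)) :
    ∃ s' : V → ℤˣ,
      (∀ g ∈ insert e K, G.sign g * (s' (G.ends g false) * s' (G.ends g true)) = 1) ∧
      ∀ g, G.Rch K (G.ends g false) (G.ends g true) →
        s' (G.ends g false) * s' (G.ends g true) = s (G.ends g false) * s (G.ends g true) := by
  classical
  by_cases h1 : G.sign e * (s (G.ends e false) * s (G.ends e true)) = 1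
  · refine ⟨s, ?_, fun _ _ => rfl⟩
    intro g hg
    rw [mem_insert] at hg
    rcases hg with rfl | hg
    · exact h1
    · exact hK g hg
  · have h2 := (Int.units_eq_one_or _).resolve_left h1
    have h3 : ∀ g, G.Rch K (G.ends g false) (G.ends g true) →
        (if G.Rch K (G.ends e false) (G.ends g false) then -s (G.ends g false)
            else s (G.ends g false)) *
          (if G.Rch K (G.ends e false) (G.ends g true) then -s (G.ends g true)
            else s (G.ends g true)) =
          s (G.ends g false) * s (G.ends g true) := by
      intro g hg
      have : G.Rch K (G.ends e false) (G.ends g false) ↔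
          G.Rch K (G.ends e false) (G.ends g true) :=
        ⟨fun h => h.trans hg, fun h => h.trans hg.symm⟩
      by_cases h : G.Rch K (G.ends e false) (G.ends g true)
      · rw [if_pos (this.2 h), if_pos h, neg_mul_neg]
      · rw [if_neg (fun h' => h (this.1 h')), if_neg h]
    refine ⟨fun v => if G.Rch K (G.ends e false) v then - s v else s v, ?_, h3⟩
    intro g hg
    rw [mem_insert] at hg
    rcases hg with rfl | hg
    · beta_reduce
      rw [if_pos (Rch.refl _ _ _), if_neg he, neg_mul, mul_neg, h2, neg_neg]
    · beta_reduce
      rw [h3 g (Rch.edge G hg _ _)]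
      exact hK g hg

theorem exists_maxK (G : SignedGraph V E) (S : Finset E) :
    ∃ K, K ⊆ S ∧ ∃ s : V → ℤˣ,
      (∀ g ∈ K, G.sign g * (s (G.ends g false) * s (G.ends g true)) = 1) ∧
      ∀ g ∈ S, g ∉ K → G.sign g * (s (G.ends g false) * s (G.ends g true)) = -1 ∧
        G.Rch K (G.ends g false) (G.ends g true) := by
  classical
  let F := S.powerset.filter fun K => ∃ s : V → ℤˣ,
    ∀ g ∈ K, G.sign g * (s (G.ends g false) * s (G.ends g true)) = 1
  have hF : F.Nonempty := ⟨∅, by simp [F]⟩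
  obtain ⟨K, hKF, hmax⟩ := F.exists_max_image card hF
  have hK' := hKF
  simp only [F, mem_filter, mem_powerset] at hK'
  obtain ⟨hKS, s, hs⟩ := hK'
  have hno : ∀ g ∈ S, g ∉ K → ¬ ∃ s : V → ℤˣ, ∀ h ∈ insert g K,
      G.sign h * (s (G.ends h false) * s (G.ends h true)) = 1 := by
    intro g hg hgK hex
    have := hmax (insert g K) (by
      simp only [F, mem_filter, mem_powerset]
      exact ⟨insert_subset hg hKS, hex⟩)
    rw [card_insert_of_notMem hgK] at this
    omega
  refine ⟨K, hKS, s, hs, fun g hg hgK => ⟨?_, ?_⟩⟩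
  · refine (Int.units_eq_one_or _).resolve_left fun h => hno g hg hgK ⟨s, ?_⟩
    intro h' hh
    rw [mem_insert] at hh
    rcases hh with rfl | hh
    · exact h
    · exact hs _ hh
  · by_contra h
    obtain ⟨s', hs', -⟩ := exists_flip hs h
    exact hno g hg hgK ⟨s', hs'⟩

theorem exists_bad_edge {G : SignedGraph V E} (hconn : G.Connected) (hunbal : ¬ G.Balanced)
    (hD : G.PropD) {e : E} {K : Finset E} {s : V → ℤˣ}
    (hK : ∀ g ∈ K, G.sign g * (s (G.ends g false) * s (G.ends g true)) = 1)
    (hmax : ∀ g ∈ univ.erase e, g ∉ K →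
      G.sign g * (s (G.ends g false) * s (G.ends g true)) = -1 ∧
        G.Rch K (G.ends g false) (G.ends g true)) (u : V) :
    ∃ g, g ≠ e ∧ g ∉ K ∧ G.Rch K (G.ends g false) u := by
  classical
  by_contra hcon
  push Not at hcon
  let t : V → ℚ := fun v => if G.Rch K v u then ((s v : ℤ) : ℚ) else 0
  have hedge : ∀ g, g ≠ e → G.Rch K (G.ends g false) (G.ends g true) := by
    intro g hg
    by_cases hgK : g ∈ K
    · exact Rch.edge G hgK _ _
    · exact (hmax g (by simp [hg]) hgK).2
  have hiff : ∀ g, g ≠ e → (G.Rch K (G.ends g false) u ↔ G.Rch K (G.ends g true) u) :=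
    fun g hg => ⟨fun h => (hedge g hg).symm.trans h, fun h => (hedge g hg).trans h⟩
  have ht : ∀ g, g ≠ e → G.Cons t g := by
    intro g hg
    by_cases hgu : G.Rch K (G.ends g false) u
    · have hgK : g ∈ K := by
        by_contra hgK
        exact hcon g hg hgK hgu
      refine (cons_unit (s := s) ?_).2 (hK g hgK)
      intro i
      cases i
      · exact if_pos hgu
      · exact if_pos ((hiff g hg).1 hgu)
    · refine cons_of_zero fun i => ?_
      cases i
      · exact if_neg hgu
      · exact if_neg (fun h => hgu ((hiff g hg).2 h))
  have hte := hD t e ht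
  have hn : ∀ v, |t v| = if G.Rch K v u then 1 else 0 := by
    intro v
    simp only [t]
    split_ifs
    · rcases Int.units_eq_one_or (s v) with h | h <;> simp [h]
    · simp
  have hall : ∀ v, G.Rch K v u := by
    intro v
    have h1 := Rch.invariant (fun x => |t x|) (fun g _ => by
      by_cases hge : g = e
      · subst hge; exact hte.abs
      · exact (ht g hge).abs) (hconn.2 v u)
    simp only [hn, if_pos (Rch.refl G K u)] at h1
    by_contra h
    rw [if_neg h] at h1
    exact zero_ne_one h1
  apply hunbal
  intro S hS
  rw [signOf_circuit G hS s]
  refine prod_eq_one fun g _ => ?_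
  refine (cons_unit (t := t) fun i => if_pos (hall _)).1 ?_
  by_cases hge : g = e
  · subst hge; exact hte
  · exact ht g hge

theorem noBalanced_of_propD {G : SignedGraph V E} (hconn : G.Connected)
    (hunbal : ¬ G.Balanced) (hD : G.PropD) (f : E) : G.NoBalancedComponentAvoiding f := by
  intro u
  obtain ⟨K, hKS, s, hK, hmax⟩ := exists_maxK G (univ.erase f)
  obtain ⟨g, hgf, hgK, hgu⟩ := exists_bad_edge hconn hunbal hD hK hmax u
  obtain ⟨h1, h2⟩ := hmax g (by simp [hgf]) hgK
  obtain ⟨P, W, hPK, hP⟩ := h2.exists_path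
  have hgP : g ∉ P := fun h => hgK (hPK h)
  obtain ⟨cP, sP⟩ := SPath.circuit (i := false) hP hgP
  refine ⟨insert g P, cP, (unbalanced_of_one hK h1 hPK hgP cP).2, ?_, ?_⟩
  · rw [mem_insert, not_or]
    exact ⟨Ne.symm hgf, fun h => ne_of_mem_erase (hKS (hPK h)) rfl⟩
  · intro w hw
    rw [sP] at hw
    exact (((hP.reach w hw).symm.mono hPK).trans hgu).mono hKS

theorem ConnOn.union {G : SignedGraph V E} {S T : Finset E} (hS : G.ConnOn S) (hT : G.ConnOn T)
    {v : V} (hv : v ∈ G.suppV S) (hv' : v ∈ G.suppV T) : G.ConnOn (S ∪ T) := by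
  have key : ∀ w ∈ G.suppV (S ∪ T), G.Rch (S ∪ T) w v := by
    intro w hw
    obtain ⟨e, he, i, rfl⟩ := mem_suppV.1 hw
    rw [mem_union] at he
    rcases he with he | he
    · exact Rch.mono subset_union_left (hS _ (ends_mem_suppV G he i) _ hv)
    · exact Rch.mono subset_union_right (hT _ (ends_mem_suppV G he i) _ hv')
  intro a ha b hb
  exact (key a ha).trans (key b hb).symm

theorem IsSignedCircuit.connOn {G : SignedGraph V E} {T : Finset E} (hT : G.IsSignedCircuit T) :
    G.ConnOn T := by
  rcases hT with hT | ⟨S₁, S₂, v, h1, h2, hd, hv, rfl⟩ |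
    ⟨S₁, S₂, P, u, v, h1, h2, hd, hP, hu, hv, hPu, hPv, hdP, rfl⟩
  · exact hT.1.2.1
  · have hv' : v ∈ G.suppV S₁ ∧ v ∈ G.suppV S₂ := by
      rw [← mem_inter, hv]; simp
    exact h1.1.2.1.union h2.1.2.1 hv'.1 hv'.2
  · rw [union_right_comm]
    refine (h1.1.2.1.union hP.2.1 hu hP.2.2.1).union h2.1.2.1 (v := v) ?_ hv
    obtain ⟨g, hg, i, hi⟩ := mem_suppV.1 hP.2.2.2.1
    exact mem_suppV.2 ⟨g, mem_union_right _ hg, i, hi⟩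

theorem cover_of_propD {G : SignedGraph V E} (hconn : G.Connected)
    (hunbal : ¬ G.Balanced) (hD : G.PropD) (e : E) :
    ∃ T : Finset E, G.IsSignedCircuit T ∧ e ∈ T := by
  obtain ⟨K, hKS, s, hK, hmax⟩ := exists_maxK G (univ.erase e)
  have heK : e ∉ K := fun h => ne_of_mem_erase (hKS h) rfl
  obtain ⟨g, hge, hgK, hgu⟩ := exists_bad_edge hconn hunbal hD hK hmax (G.ends e false)
  obtain ⟨h1, h2⟩ := hmax g (by simp [hge]) hgK
  by_cases hr : G.Rch K (G.ends e false) (G.ends e true)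
  · by_cases hs : G.sign e * (s (G.ends e false) * s (G.ends e true)) = 1
    · obtain ⟨P, W, hPK, hP⟩ := hr.exists_path
      have heP : e ∉ P := fun h => heK (hPK h)
      obtain ⟨cP, sP⟩ := SPath.circuit (i := false) hP heP
      refine ⟨insert e P, Or.inl ⟨cP, ?_⟩, by simp⟩
      rw [signOf_circuit G cP s, prod_insert heP, hs, prod_eq_one fun g hg => hK g (hPK hg),
        mul_one]
    · obtain ⟨T, -, hT, heT, -⟩ := exists_signedCircuit hK heK hgK (Ne.symm hge)
        ((Int.units_eq_one_or _).resolve_left hs) h1 hr h2 hgu.symm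
      exact ⟨T, hT, heT⟩
  · obtain ⟨g', hge', hgK', hgu'⟩ := exists_bad_edge hconn hunbal hD hK hmax (G.ends e true)
    obtain ⟨h1', h2'⟩ := hmax g' (by simp [hge']) hgK'
    obtain ⟨s', hs', hs''⟩ := exists_flip hK hr
    have hgg : g ≠ g' := by
      rintro rfl
      exact hr (hgu.symm.trans hgu')
    have hsub : K ⊆ insert e K := subset_insert _ _
    obtain ⟨T, hTK, hT, hgT, hgT'⟩ := exists_signedCircuit hs' (e := g) (f := g')
      (by rw [mem_insert]; tauto) (by rw [mem_insert]; tauto) hgg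
      (by rw [hs'' g h2, h1]) (by rw [hs'' g' h2', h1']) (h2.mono hsub) (h2'.mono hsub)
      ((hgu.mono hsub).trans ((Rch.edge G (mem_insert_self _ _) false true).trans
        (hgu'.mono hsub).symm))
    refine ⟨T, hT, ?_⟩
    by_contra heT
    have hTr := hT.connOn _ (ends_mem_suppV G hgT false) _ (ends_mem_suppV G hgT' false)
    have hinv := Rch.invariant (fun v => G.Rch K v (G.ends e false)) (fun h hh => by
      have hhe : h ≠ e := by rintro rfl; exact heT hh
      have hrr : G.Rch K (G.ends h false) (G.ends h true) := by
        by_cases hhK : h ∈ K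
        · exact Rch.edge G hhK _ _
        · exact (hmax h (by simp [hhe]) hhK).2
      exact propext ⟨fun k => hrr.symm.trans k, fun k => hrr.trans k⟩) hTr
    have := (iff_of_eq hinv).1 hgu
    exact hr (this.symm.trans hgu')

/-! ### Flows -/

theorem pairing (G : SignedGraph V E) (O : G.Orientation) (φ : E → ℚ) (s : V → ℚ) :
    ∑ v, s v * (∑ p ∈ univ.filter (fun p : E × Bool => G.ends p.1 p.2 = v),
      (if O.dir p.1 p.2 then φ p.1 else -φ p.1)) =
    ∑ g, (if O.dir g false then (1 : ℚ) else -1) * φ g *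
      (s (G.ends g false) - ((G.sign g : ℤ) : ℚ) * s (G.ends g true)) := by
  have h1 : ∀ v, s v * (∑ p ∈ univ.filter (fun p : E × Bool => G.ends p.1 p.2 = v),
      (if O.dir p.1 p.2 then φ p.1 else -φ p.1)) =
      ∑ p ∈ univ.filter (fun p : E × Bool => G.ends p.1 p.2 = v),
      s (G.ends p.1 p.2) * (if O.dir p.1 p.2 then φ p.1 else -φ p.1) := by
    intro v
    rw [mul_sum]
    refine sum_congr rfl fun p hp => ?_
    rw [(mem_filter.1 hp).2]
  simp_rw [h1]
  rw [Finset.sum_fiberwise, Fintype.sum_prod_type]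
  refine sum_congr rfl fun g _ => ?_
  rw [Fintype.sum_bool]
  have hc := O.compat g
  rcases Int.units_eq_one_or (G.sign g) with h | h
  · have := hc.1 h
    cases ha : O.dir g false <;> cases hb : O.dir g true <;> simp_all <;> ring
  · have : ¬ (O.dir g false ≠ O.dir g true) := fun h' => by
      rw [hc.2 h'] at h
      exact absurd h (by decide)
    cases ha : O.dir g false <;> cases hb : O.dir g true <;> simp_all <;> ring

theorem propD_of_flow {G : SignedGraph V E} (h : G.FlowAdmissible) : G.PropD := by
  obtain ⟨O, φ, hφ, hnz⟩ := h
  intro s e hs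
  have hp := pairing G O (fun g => (φ g : ℚ)) s
  rw [sum_eq_zero, sum_eq_single e] at hp
  · have h1 : (if O.dir e false then (1 : ℚ) else -1) ≠ 0 := by split_ifs <;> norm_num
    have h2 : (φ e : ℚ) ≠ 0 := by exact_mod_cast hnz e
    have h3 := (mul_eq_zero.1 hp.symm).resolve_left (mul_ne_zero h1 h2)
    exact sub_eq_zero.1 h3
  · intro g _ hge
    have := hs g hge
    unfold Cons at this
    rw [this, sub_self, mul_zero]
  · simp
  · intro v _
    have := congrArg (fun z : ℤ => (z : ℚ)) (hφ v)
    simp only [Int.cast_sum, Int.cast_zero] at this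
    rw [← mul_zero (s v), ← this]
    congr 1
    refine sum_congr rfl fun p _ => ?_
    split_ifs <;> simp

/-- A standard orientation. -/
def stdO (G : SignedGraph V E) : G.Orientation where
  dir g i := if i then decide (G.sign g ≠ 1) else true
  compat g := by
    by_cases h : G.sign g = 1 <;> simp [h]

/-- The boundary map. -/
def bdry (G : SignedGraph V E) (O : G.Orientation) : (E → ℚ) →ₗ[ℚ] (V → ℚ) where
  toFun φ v := ∑ p ∈ univ.filter (fun p : E × Bool => G.ends p.1 p.2 = v),
      (if O.dir p.1 p.2 then φ p.1 else -φ p.1)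
  map_add' φ ψ := by
    ext v
    simp only [Pi.add_apply]
    rw [← sum_add_distrib]
    refine sum_congr rfl fun p _ => ?_
    split_ifs <;> ring
  map_smul' c φ := by
    ext v
    simp only [Pi.smul_apply, smul_eq_mul, RingHom.id_apply]
    rw [mul_sum]
    refine sum_congr rfl fun p _ => ?_
    split_ifs <;> ring

theorem exists_flow_at {G : SignedGraph V E} (hD : G.PropD) (O : G.Orientation) (e : E) :
    ∃ φ : E → ℚ, bdry G O φ = 0 ∧ φ e ≠ 0 := by
  by_contra hcon
  push Not at hcon
  have h1 : (LinearMap.proj e : (E → ℚ) →ₗ[ℚ] ℚ) ∈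
      (LinearMap.ker (bdry G O)).dualAnnihilator := by
    rw [Submodule.mem_dualAnnihilator]
    intro φ hφ
    exact hcon φ hφ
  rw [← LinearMap.range_dualMap_eq_dualAnnihilator_ker] at h1
  obtain ⟨ψ, hψ⟩ := h1
  let s : V → ℚ := fun v => ψ (Pi.single v 1)
  have hψs : ∀ w : V → ℚ, ψ w = ∑ v, s v * w v := by
    intro w
    conv_lhs => rw [pi_eq_sum_univ' w]
    rw [map_sum]
    refine sum_congr rfl fun v _ => ?_
    rw [map_smul, smul_eq_mul, mul_comm]
  have key : ∀ g, (if O.dir g false then (1 : ℚ) else -1) *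
      (s (G.ends g false) - ((G.sign g : ℤ) : ℚ) * s (G.ends g true)) =
      (Pi.single g (1 : ℚ) : E → ℚ) e := by
    intro g
    have h2 := LinearMap.congr_fun hψ (Pi.single g 1)
    rw [LinearMap.dualMap_apply, hψs] at h2
    have h3 := pairing G O (Pi.single g 1) s
    rw [sum_eq_single g] at h3
    · rw [Pi.single_eq_same, mul_one] at h3
      rw [← h3]
      exact h2
    · intro b _ hb
      rw [Pi.single_eq_of_ne hb, mul_zero, zero_mul]
    · simp
  have hne : ∀ g, (if O.dir g false then (1 : ℚ) else -1) ≠ 0 := by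
    intro g; split_ifs <;> norm_num
  have hce : G.Cons s e := by
    refine hD s e fun g hge => ?_
    have := key g
    rw [Pi.single_eq_of_ne (Ne.symm hge)] at this
    exact sub_eq_zero.1 ((mul_eq_zero.1 this).resolve_left (hne g))
  have := key e
  unfold Cons at hce
  rw [hce, sub_self, mul_zero, Pi.single_eq_same] at this
  exact zero_ne_one this

theorem exists_flow_on {G : SignedGraph V E} (hD : G.PropD) (O : G.Orientation)
    (F : Finset E) : ∃ φ : E → ℚ, bdry G O φ = 0 ∧ ∀ e ∈ F, φ e ≠ 0 := by
  induction F using Finset.induction_on with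
  | empty => exact ⟨0, map_zero _, by simp⟩
  | insert e F _ ih =>
    obtain ⟨φ, hφ, hF⟩ := ih
    obtain ⟨ψ, hψ, he⟩ := exists_flow_at hD O e
    obtain ⟨t, ht⟩ := Infinite.exists_notMem_finset (univ.image fun g => -φ g / ψ g)
    refine ⟨φ + t • ψ, by rw [map_add, map_smul, hφ, hψ]; simp, ?_⟩
    intro g hg h0
    simp only [Pi.add_apply, Pi.smul_apply, smul_eq_mul] at h0
    by_cases hg0 : ψ g = 0
    · rw [mem_insert] at hg
      rcases hg with rfl | hg
      · exact he hg0
      · rw [hg0, mul_zero, add_zero] at h0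
        exact hF g hg h0
    · apply ht
      rw [mem_image]
      refine ⟨g, mem_univ _, ?_⟩
      rw [div_eq_iff hg0]
      linarith

theorem flow_of_propD {G : SignedGraph V E} (hD : G.PropD) : G.FlowAdmissible := by
  obtain ⟨φ, hφ, hnz⟩ := exists_flow_on hD (stdO G) univ
  obtain ⟨b, hb⟩ := IsLocalization.exist_integer_multiples_of_finite (nonZeroDivisors ℤ) φ
  choose n hn using hb
  have hb0 : ((b : ℤ) : ℚ) ≠ 0 := by
    exact_mod_cast nonZeroDivisors.coe_ne_zero b
  have hn' : ∀ e, ((n e : ℤ) : ℚ) = ((b : ℤ) : ℚ) * φ e := by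
    intro e
    have := hn e
    simpa using this
  refine ⟨stdO G, n, ?_, ?_⟩
  · intro v
    have h1 := congrFun hφ v
    have h2 : ((∑ p ∈ univ.filter (fun p : E × Bool => G.ends p.1 p.2 = v),
      (if (stdO G).dir p.1 p.2 then n p.1 else -n p.1) : ℤ) : ℚ) =
      ((b : ℤ) : ℚ) * bdry G (stdO G) φ v := by
      change _ = ((b : ℤ) : ℚ) * ∑ p ∈ univ.filter (fun p : E × Bool => G.ends p.1 p.2 = v),
        (if (stdO G).dir p.1 p.2 then φ p.1 else -φ p.1)
      rw [mul_sum, Int.cast_sum]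
      refine sum_congr rfl fun p _ => ?_
      split_ifs
      · exact hn' _
      · rw [Int.cast_neg, hn', mul_neg]
    rw [h1, Pi.zero_apply, mul_zero] at h2
    exact_mod_cast h2
  · intro e h0
    have := hn' e
    rw [h0, Int.cast_zero] at this
    exact (mul_ne_zero hb0 (hnz e (mem_univ _))) this.symm

end SignedGraph

open SignedGraph Finset in
/-- For a connected unbalanced signed graph `G`, the following
are equivalent: (a) `G` admits a nowhere-zero integer flow; (b) the edges of
`G` can be covered by signed circuits; (c) for each edge `f`, the graph
`G - f` contains no balanced connected component. -/
theorem stmt6 {V E : Type} [Fintype V] [Fintype E] [DecidableEq V]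
    [DecidableEq E] (G : SignedGraph V E) (hconn : G.Connected)
    (hunbal : ¬ G.Balanced) :
    (G.FlowAdmissible ↔ ∀ e : E, ∃ T : Finset E, G.IsSignedCircuit T ∧ e ∈ T) ∧
    (G.FlowAdmissible ↔ ∀ f : E, G.NoBalancedComponentAvoiding f) := by
  have ha : G.FlowAdmissible ↔ G.PropD := ⟨propD_of_flow, flow_of_propD⟩
  rw [ha]
  exact ⟨⟨fun hD e => cover_of_propD hconn hunbal hD e, propD_of_cover⟩,
    ⟨fun hD f => noBalanced_of_propD hconn hunbal hD f, propD_of_noBalanced⟩⟩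
end

section
/- A 2-edge-connected unbalanced signed graph is flow-admissible if and only if it is not tightly unbalanced. -/
open Finset

namespace SignedGraph

variable {V E : Type} [Fintype V] [Fintype E] [DecidableEq V] [DecidableEq E]

/-- `s` is a switching potential for the edges of `T`. -/
def Pot (G : SignedGraph V E) (T : Finset E) (s : V → ℤˣ) : Prop :=
  ∀ e ∈ T, ∀ i : Bool, G.sign e = s (G.ends e i) * s (G.ends e (!i))

theorem prod_ends_eq_one (G : SignedGraph V E) (S : Finset E)
    (h : ∀ v ∈ G.suppV S, G.valencyOn S v = 2) (s : V → ℤˣ) :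
    ∏ e ∈ S, (s (G.ends e false) * s (G.ends e true)) = 1 := by
  have h1 : ∏ e ∈ S, (s (G.ends e false) * s (G.ends e true))
      = ∏ p ∈ univ.filter (fun p : E × Bool => p.1 ∈ S), s (G.ends p.1 p.2) := by
    have : univ.filter (fun p : E × Bool => p.1 ∈ S) = S ×ˢ (univ : Finset Bool) := by
      ext p; simp
    rw [this, Finset.prod_product]
    apply Finset.prod_congr rfl
    intro e _
    simp [mul_comm]
  rw [h1, ← Finset.prod_fiberwise (univ.filter (fun p : E × Bool => p.1 ∈ S))
    (fun p => G.ends p.1 p.2) (fun p => s (G.ends p.1 p.2))]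
  apply Finset.prod_eq_one
  intro v _
  have h2 : ∏ p ∈ (univ.filter (fun p : E × Bool => p.1 ∈ S)).filter
      (fun p => G.ends p.1 p.2 = v), s (G.ends p.1 p.2) = s v ^ G.valencyOn S v := by
    rw [Finset.filter_filter, valencyOn, ← Finset.prod_const]
    apply Finset.prod_congr rfl
    intro p hp
    rw [(Finset.mem_filter.mp hp).2.2]
  rw [h2]
  by_cases hv : v ∈ G.suppV S
  · rw [h v hv, Int.units_sq]
  · have : G.valencyOn S v = 0 := by
      rw [valencyOn, Finset.card_eq_zero, Finset.filter_eq_empty_iff]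
      rintro p _ ⟨hp, hpv⟩
      exact hv (by simp only [suppV, Finset.mem_filter, Finset.mem_univ, true_and]; exact ⟨p.1, hp, p.2, hpv⟩)
    rw [this, pow_zero]

theorem Pot.signOf_eq_one {G : SignedGraph V E} {T S : Finset E} {s : V → ℤˣ}
    (hs : G.Pot T s) (hST : S ⊆ T) (hS : G.IsCircuit S) : G.signOf S = 1 := by
  rw [← G.prod_ends_eq_one S hS.2.2 s, signOf]
  apply Finset.prod_congr rfl
  intro e he
  exact hs e (hST he) false

theorem units_ne {a b : ℤˣ} (h : a ≠ b) : a = -b := by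
  rcases Int.units_eq_one_or a with rfl | rfl <;> rcases Int.units_eq_one_or b with rfl | rfl <;>
    simp_all

theorem units_aux1 : ∀ {g x1 x2 y1 y2 : ℤˣ}, g = -(x1 * y1) → g = x2 * y2 →
    y1 * y2 ≠ x1 * x2 := by
  decide

theorem units_aux2 : ∀ {g x1 x2 y1 y2 : ℤˣ}, g = x1 * y1 → g = x2 * y2 →
    x1 * x2 = y1 * y2 := by
  decide

theorem bool_three (i j k : Bool) (h1 : i ≠ j) (h2 : i ≠ k) (h3 : j ≠ k) : False := by
  revert i j k; decide

set_option maxHeartbeats 1000000 in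
theorem exists_unbalanced_circuit (G : SignedGraph V E) (T : Finset E)
    (hT : ¬ ∃ s, G.Pot T s) : ∃ S ⊆ T, G.IsCircuit S ∧ G.signOf S = -1 := by
  classical
  obtain ⟨S, hST, hS⟩ := exists_minimal_le_of_wellFoundedLT
    (fun S : Finset E => ¬ ∃ s, G.Pot S s) T hT
  have hno : ∀ s, ¬ G.Pot S s := fun s hs => hS.prop ⟨s, hs⟩
  have hex : ∀ e, ∃ s : V → ℤˣ, e ∈ S →
      (∀ e' ∈ S, e' ≠ e → ∀ i, G.sign e' = s (G.ends e' i) * s (G.ends e' (!i))) ∧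
      ∀ i, G.sign e = -(s (G.ends e i) * s (G.ends e (!i))) := by
    intro e
    by_cases he : e ∈ S
    · have : ∃ s, G.Pot (S.erase e) s := by
        by_contra hcon
        have := hS.le_of_le hcon (Finset.erase_subset e S)
        exact Finset.notMem_erase e S (this he)
      obtain ⟨s, hs⟩ := this
      have h1 : ∀ e' ∈ S, e' ≠ e → ∀ i, G.sign e' = s (G.ends e' i) * s (G.ends e' (!i)) :=
        fun e' he' hne => hs e' (Finset.mem_erase.mpr ⟨hne, he'⟩)
      refine ⟨s, fun _ => ⟨h1, fun i => units_ne fun heq => hno s ?_⟩⟩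
      intro e' he' j
      by_cases hee : e' = e
      · subst hee
        cases i <;> cases j <;> simp_all [mul_comm]
      · exact h1 e' he' hee j
    · exact ⟨fun _ => 1, fun h => absurd h he⟩
  choose s hs using hex
  have hloop : ∀ e ∈ S, ∀ i, G.ends e i = G.ends e (!i) → ∀ e' ∈ S, e' = e := by
    intro e he i hl e' he'
    by_contra hne
    have h1 := (hs e he).2 i
    have h2 := (hs e' he').1 e he (Ne.symm hne) i
    rw [hl, Int.units_mul_self] at h1 h2
    rw [h1] at h2
    exact absurd h2 (by decide)
  have hne : S.Nonempty := by
    by_contra h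
    rw [Finset.not_nonempty_iff_eq_empty] at h
    exact hno (fun _ => 1) (by intro e he; simp [h] at he)
  have hconn : G.ConnOn S := by
    intro u hu v hv
    by_contra hcon
    simp only [suppV, Finset.mem_filter, Finset.mem_univ, true_and] at hu hv
    obtain ⟨e, he, i, hei⟩ := hu
    obtain ⟨e', he', i', hei'⟩ := hv
    let A : V → Prop := fun x => Relation.ReflTransGen (G.AdjOn S) u x
    have hA : ∀ f ∈ S, ∀ j, A (G.ends f j) → A (G.ends f (!j)) := fun f hf j h =>
      Relation.ReflTransGen.tail h ⟨f, hf, j, rfl, rfl⟩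
    have hA' : ∀ f ∈ S, ∀ j, A (G.ends f (!j)) → A (G.ends f j) := fun f hf j h => by
      simpa using hA f hf (!j) h
    have hAall : ∀ f ∈ S, ∀ j k, A (G.ends f j) → A (G.ends f k) := fun f hf j k h => by
      by_cases hjk : k = j
      · rwa [hjk]
      · have : k = !j := by revert hjk; cases j <;> cases k <;> simp
        rw [this]; exact hA f hf j h
    have hAu : A u := Relation.ReflTransGen.refl
    have hAv : ¬ A v := hcon
    apply hno (fun x => if A x then s e' x else s e x)
    intro f hf j
    by_cases hAf : A (G.ends f j)
    · have hfe : f ≠ e' := by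
        rintro rfl
        exact hAv (hei' ▸ hAall f hf j i' hAf)
      simp only [if_pos hAf, if_pos (hA f hf j hAf)]
      exact (hs e' he').1 f hf hfe j
    · have hfe : f ≠ e := by
        rintro rfl
        exact hAf (hAall f hf i j (hei.symm ▸ hAu))
      simp only [if_neg hAf, if_neg (fun h => hAf (hA' f hf j h))]
      exact (hs e he).1 f hf hfe j
  have hthree : ∀ (v : V) (e1 e2 e3 : E) (i1 i2 i3 : Bool), e1 ∈ S → e2 ∈ S → e3 ∈ S →
      G.ends e1 i1 = v → G.ends e2 i2 = v → G.ends e3 i3 = v →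
      e1 ≠ e2 → e1 ≠ e3 → e2 ≠ e3 → False := by
    intro v e1 e2 e3 i1 i2 i3 h1 h2 h3 hv1 hv2 hv3 h12 h13 h23
    let A : V → Prop := fun x => s e1 x * s e2 x ≠ s e1 v * s e2 v ∧
      s e1 x * s e3 x ≠ s e1 v * s e3 v
    have hAv : ¬ A v := fun h => h.1 rfl
    have key : ∀ f ∈ S, ∃ j, G.sign f = (if A (G.ends f j) then - s e1 (G.ends f j) else s e1 (G.ends f j))
        * (if A (G.ends f (!j)) then - s e1 (G.ends f (!j)) else s e1 (G.ends f (!j))) := by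
      intro f hf
      by_cases hf1 : f = e1
      · subst hf1
        refine ⟨i1, ?_⟩
        have a := (hs f hf).2 i1
        have b := (hs e2 h2).1 f hf h12 i1
        have c := (hs e3 h3).1 f hf h13 i1
        rw [hv1] at a b c ⊢
        have hAw : A (G.ends f (!i1)) := by
          exact ⟨units_aux1 a b, units_aux1 a c⟩
        rw [if_neg hAv, if_pos hAw, a]; simp
      · by_cases hf2 : f = e2
        · subst hf2
          refine ⟨i2, ?_⟩
          have a := (hs e1 h1).1 f hf (Ne.symm h12) i2
          have c := (hs e3 h3).1 f hf h23 i2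
          rw [hv2] at a c ⊢
          have hAw : ¬ A (G.ends f (!i2)) := by
            exact fun h => h.2 (units_aux2 a c).symm
          rw [if_neg hAv, if_neg hAw, a]
        · by_cases hf3 : f = e3
          · subst hf3
            refine ⟨i3, ?_⟩
            have a := (hs e1 h1).1 f hf (Ne.symm h13) i3
            have c := (hs e2 h2).1 f hf (Ne.symm h23) i3
            rw [hv3] at a c ⊢
            have hAw : ¬ A (G.ends f (!i3)) := by
              exact fun h => h.1 (units_aux2 a c).symm
            rw [if_neg hAv, if_neg hAw, a]
          · refine ⟨false, ?_⟩
            have a := (hs e1 h1).1 f hf hf1 false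
            have b := (hs e2 h2).1 f hf hf2 false
            have c := (hs e3 h3).1 f hf hf3 false
            have t12 : s e1 (G.ends f false) * s e2 (G.ends f false)
                = s e1 (G.ends f (!false)) * s e2 (G.ends f (!false)) := by
              exact units_aux2 a b
            have t13 : s e1 (G.ends f false) * s e3 (G.ends f false)
                = s e1 (G.ends f (!false)) * s e3 (G.ends f (!false)) := by
              exact units_aux2 a c
            have hAA : A (G.ends f false) ↔ A (G.ends f (!false)) := by
              simp only [A]
              rw [t12, t13]
            by_cases hAx : A (G.ends f false)
            · rw [if_pos hAx, if_pos (hAA.mp hAx), a]; simp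
            · rw [if_neg hAx, if_neg (fun h => hAx (hAA.mpr h)), a]
    apply hno (fun x => if A x then - s e1 x else s e1 x)
    intro f hf i
    obtain ⟨j, hj⟩ := key f hf
    by_cases hij : i = j
    · rw [hij]; exact hj
    · have : i = !j := by revert hij; cases j <;> cases i <;> simp
      rw [this, hj, Bool.not_not, mul_comm]
  have hval : ∀ v ∈ G.suppV S, G.valencyOn S v = 2 := by
    intro v hv
    simp only [suppV, Finset.mem_filter, Finset.mem_univ, true_and] at hv
    obtain ⟨e, he, i, hei⟩ := hv
    apply le_antisymm
    · by_contra hgt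
      push Not at hgt
      rw [valencyOn, Finset.two_lt_card_iff] at hgt
      obtain ⟨⟨e1, i1⟩, ⟨e2, i2⟩, ⟨e3, i3⟩, m1, m2, m3, n12, n13, n23⟩ := hgt
      simp only [Finset.mem_filter, Finset.mem_univ, true_and] at m1 m2 m3
      have aux : ∀ (e : E) (i j : Bool), e ∈ S → G.ends e i = v → G.ends e j = v → i ≠ j →
          ∀ e' ∈ S, e' = e := by
        intro e i j he h1 h2 hij
        apply hloop e he i
        have : (!i) = j := by revert hij; cases i <;> cases j <;> simp
        rw [this, h1, h2]
      have bad : ¬ (e1 = e2 ∧ e1 = e3) := by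
        rintro ⟨rfl, rfl⟩
        exact bool_three i1 i2 i3 (fun h => n12 (by rw [h])) (fun h => n13 (by rw [h]))
          (fun h => n23 (by rw [h]))
      have d12 : e1 ≠ e2 := by
        rintro rfl
        exact bad ⟨rfl, (aux e1 i1 i2 m1.1 m1.2 m2.2 (fun h => n12 (by rw [h])) e3 m3.1).symm⟩
      have d13 : e1 ≠ e3 := by
        rintro rfl
        exact bad ⟨(aux e1 i1 i3 m1.1 m1.2 m3.2 (fun h => n13 (by rw [h])) e2 m2.1).symm, rfl⟩
      have d23 : e2 ≠ e3 := by
        rintro rfl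
        have := (aux e2 i2 i3 m2.1 m2.2 m3.2 (fun h => n23 (by rw [h])) e1 m1.1)
        exact bad ⟨this, this⟩
      exact hthree v e1 e2 e3 i1 i2 i3 m1.1 m2.1 m3.1 m1.2 m2.2 m3.2 d12 d13 d23
    · by_contra hlt
      have hcard : G.valencyOn S v ≤ 1 := by omega
      rw [valencyOn, Finset.card_le_one] at hcard
      have huniq : ∀ f ∈ S, ∀ j, G.ends f j = v → f = e ∧ j = i := by
        intro f hf j hfj
        have := hcard (f, j) (by simp [hf, hfj]) (e, i) (by simp [he, hei])
        simpa using this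
      apply hno (fun x => if x = v then - s e x else s e x)
      intro f hf j
      beta_reduce
      by_cases hfe : f = e
      · subst hfe
        have hother : G.ends f (!i) ≠ v := fun h => by
          have := (huniq f hf _ h).2
          simp at this
        have a := (hs f hf).2 i
        by_cases hij : j = i
        · subst hij
          rw [if_pos hei, if_neg hother, a]; simp
        · have : j = !i := by revert hij; cases j <;> cases i <;> simp
          rw [this, Bool.not_not, if_pos hei, if_neg hother, a]; simp [mul_comm]
      · rw [if_neg (fun h => hfe (huniq f hf _ h).1), if_neg (fun h => hfe (huniq f hf _ h).1)]
        exact (hs e he).1 f hf hfe j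
  refine ⟨S, hST, ⟨hne, hconn, hval⟩, ?_⟩
  obtain ⟨e, he⟩ := hne
  have hp := G.prod_ends_eq_one S hval (s e)
  rw [← Finset.mul_prod_erase S _ he] at hp
  rw [signOf, ← Finset.mul_prod_erase S _ he, (hs e he).2 false,
    Finset.prod_congr rfl (fun f hf => (hs e he).1 f (Finset.mem_of_mem_erase hf)
      (Finset.ne_of_mem_erase hf) false)]
  simp only [Bool.not_false]
  rw [neg_mul, hp]

/-- The incidence coefficient. -/
def coeff {G : SignedGraph V E} (O : G.Orientation) (e : E) (i : Bool) : ℤ :=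
  if O.dir e i then 1 else -1

theorem coeff_rel {G : SignedGraph V E} (O : G.Orientation) (e : E) :
    coeff O e true = - (G.sign e : ℤ) * coeff O e false := by
  have h := O.compat e
  unfold coeff
  rcases Int.units_eq_one_or (G.sign e) with h1 | h1
  · rw [h1] at h ⊢
    have := h.mp rfl
    cases h2 : O.dir e true <;> cases h3 : O.dir e false <;> simp_all
  · rw [h1] at h ⊢
    have : ¬ (O.dir e false ≠ O.dir e true) := fun hh => absurd (h.mpr hh) (by decide)
    cases h2 : O.dir e true <;> cases h3 : O.dir e false <;> simp_all

theorem coeff_ne {G : SignedGraph V E} (O : G.Orientation) (e : E) (i : Bool) :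
    coeff O e i ≠ 0 := by
  unfold coeff; split <;> simp

/-- Weighted sum of the boundary. -/
theorem sum_boundary {R : Type} [CommRing R] {G : SignedGraph V E} (O : G.Orientation)
    (y : V → R) (φ : E → R) :
    ∑ v, y v * ∑ p ∈ univ.filter (fun p : E × Bool => G.ends p.1 p.2 = v),
      (if O.dir p.1 p.2 then φ p.1 else -φ p.1)
    = ∑ e, (coeff O e false : R) * (y (G.ends e false) - ((G.sign e : ℤ) : R) * y (G.ends e true)) * φ e := by
  have h1 : ∀ v, y v * ∑ p ∈ univ.filter (fun p : E × Bool => G.ends p.1 p.2 = v),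
      (if O.dir p.1 p.2 then φ p.1 else -φ p.1)
      = ∑ p ∈ univ.filter (fun p : E × Bool => G.ends p.1 p.2 = v),
        y (G.ends p.1 p.2) * ((coeff O p.1 p.2 : R) * φ p.1) := by
    intro v
    rw [Finset.mul_sum]
    apply Finset.sum_congr rfl
    intro p hp
    rw [(Finset.mem_filter.mp hp).2]
    unfold coeff
    split <;> simp
  rw [Finset.sum_congr rfl (fun v _ => h1 v),
    Finset.sum_fiberwise univ (fun p : E × Bool => G.ends p.1 p.2)
      (fun p => y (G.ends p.1 p.2) * ((coeff O p.1 p.2 : R) * φ p.1)),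
    ← Finset.univ_product_univ, Finset.sum_product]
  apply Finset.sum_congr rfl
  intro e _
  rw [Fintype.sum_bool, coeff_rel]
  push_cast
  ring

theorem admissible_imp (G : SignedGraph V E) (h : G.FlowAdmissible) :
    ¬ G.TightlyUnbalanced := by
  rintro ⟨hub, f, hf⟩
  obtain ⟨O, φ, hφ, hnz⟩ := h
  have hpot : ∃ s, G.Pot (univ.erase f) s := by
    by_contra hcon
    obtain ⟨S, hS, hc, hneg⟩ := G.exists_unbalanced_circuit _ hcon
    have := hf S hc (fun h => Finset.notMem_erase f univ (hS h))
    rw [this] at hneg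
    exact absurd hneg (by decide)
  obtain ⟨s, hs⟩ := hpot
  have hb := sum_boundary O (fun v => ((s v : ℤˣ) : ℤ)) φ
  have hz : ∀ e, e ≠ f → ((s (G.ends e false) : ℤ) - ((G.sign e : ℤ)) * s (G.ends e true)) = 0 := by
    intro e he
    have := hs e (by simp [he]) false
    rw [this, Units.val_mul, mul_assoc, Bool.not_false, ← Units.val_mul (s (G.ends e true)),
      Int.units_mul_self]
    simp
  rw [Finset.sum_eq_zero (fun v _ => by rw [hφ v, mul_zero]), Finset.sum_eq_single f] at hb
  · have h0 : ((s (G.ends f false) : ℤ) - ((G.sign f : ℤ)) * s (G.ends f true)) = 0 := by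
      have := hb.symm
      simp only [Int.cast_id, mul_eq_zero] at this
      rcases this with (h | h) | h
      · exact absurd h (coeff_ne O f false)
      · exact h
      · exact absurd h (hnz f)
    apply hub
    intro S hS
    have hp : G.Pot univ s := by
      intro e _ i
      by_cases he : e = f
      · subst he
        have h1 : s (G.ends e false) = G.sign e * s (G.ends e true) := by
          apply Units.ext
          push_cast
          linarith
        cases i
        · simp [h1, mul_assoc]
        · simp only [Bool.not_true]
          rw [h1, mul_comm, mul_assoc, Int.units_mul_self, mul_one]
      · exact hs e (by simp [he]) i
    exact hp.signOf_eq_one (Finset.subset_univ S) hS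
  · intro e _ he
    simp [hz e he]
  · simp

theorem imp_admissible (G : SignedGraph V E) (h2 : G.TwoEdgeConnected) (hub : ¬ G.Balanced)
    (ht : ¬ G.TightlyUnbalanced) : G.FlowAdmissible := by
  classical
  have hnp : ∀ f s, ¬ G.Pot (univ.erase f) s := fun f s hs => ht ⟨hub, f, fun S hS hfS =>
    hs.signOf_eq_one (fun e he => by
      simp only [Finset.mem_erase, Finset.mem_univ, and_true]
      rintro rfl
      exact hfS he) hS⟩
  let O : G.Orientation :=
    { dir := fun e i => if i then true else decide (G.sign e ≠ 1)
      compat := fun e => by simp }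
  let L : V → Module.Dual ℚ (E → ℚ) := fun v =>
    ∑ p ∈ univ.filter (fun p : E × Bool => G.ends p.1 p.2 = v),
      (if O.dir p.1 p.2 then LinearMap.proj p.1 else - LinearMap.proj p.1)
  have hL : ∀ v φ, L v φ = ∑ p ∈ univ.filter (fun p : E × Bool => G.ends p.1 p.2 = v),
      (if O.dir p.1 p.2 then φ p.1 else -φ p.1) := by
    intro v φ
    simp only [L, LinearMap.sum_apply]
    apply Finset.sum_congr rfl
    intro p _
    split <;> simp
  have hex : ∀ f : E, ∃ φ ∈ (⨅ v, LinearMap.ker (L v)), (LinearMap.proj f : Module.Dual ℚ (E → ℚ)) φ ≠ 0 := by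
    intro f
    by_contra! hcon
    have hmem : (LinearMap.proj f : Module.Dual ℚ (E → ℚ)) ∈ Submodule.span ℚ (Set.range L) :=
      mem_span_of_iInf_ker_le_ker (fun φ hφ => hcon φ hφ)
    rw [Submodule.mem_span_range_iff_exists_fun] at hmem
    obtain ⟨y, hy⟩ := hmem
    have hy' : ∀ φ : E → ℚ, φ f = ∑ e, (coeff O e false : ℚ) *
        (y (G.ends e false) - ((G.sign e : ℤ) : ℚ) * y (G.ends e true)) * φ e := by
      intro φ
      rw [← sum_boundary]
      have := congrArg (fun M => M φ) hy
      simp only [LinearMap.sum_apply, LinearMap.smul_apply, smul_eq_mul, LinearMap.proj_apply, hL] at this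
      exact this.symm
    have hyne : ∀ e, e ≠ f → y (G.ends e false) = ((G.sign e : ℤ) : ℚ) * y (G.ends e true) := by
      intro e he
      have := hy' (Pi.single e 1)
      rw [Finset.sum_eq_single e (fun e' _ hne => by simp [hne]) (by simp)] at this
      simp only [Pi.single_eq_same, Pi.single_eq_of_ne (Ne.symm he), mul_one] at this
      rcases mul_eq_zero.mp this.symm with h | h
      · exact absurd (by exact_mod_cast h) (coeff_ne O e false)
      · linarith
    have habs : ∀ e, e ≠ f → |y (G.ends e false)| = |y (G.ends e true)| := by
      intro e he
      rw [hyne e he]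
      rcases Int.units_eq_one_or (G.sign e) with h | h <;> rw [h] <;> simp
    have hconst : ∀ u v, |y u| = |y v| := by
      intro u v
      induction h2.2 f u v with
      | refl => rfl
      | tail _ hadj ih =>
        rw [ih]
        obtain ⟨e, he, i, rfl, rfl⟩ := hadj
        have := habs e (Finset.ne_of_mem_erase he)
        cases i
        · exact this
        · exact this.symm
    have hnz : ∀ v, y v ≠ 0 := by
      intro v hv
      have hall : ∀ u, y u = 0 := fun u => by
        have := hconst u v
        rwa [hv, abs_zero, abs_eq_zero] at this
      have := hy' (fun _ => 1)
      simp [hall] at this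
    apply hnp f (fun v => if 0 < y v then 1 else -1)
    have main : ∀ e, e ≠ f → G.sign e = (if 0 < y (G.ends e false) then 1 else -1)
        * (if 0 < y (G.ends e true) then 1 else -1) := by
      intro e he
      have h1 := hyne e he
      have h2 := hnz (G.ends e true)
      rcases Int.units_eq_one_or (G.sign e) with h | h
      · rw [h] at h1 ⊢
        have h1 : y (G.ends e false) = y (G.ends e true) := by simpa using h1
        rw [h1]; split <;> simp
      · rw [h] at h1 ⊢
        have h1 : y (G.ends e false) = - y (G.ends e true) := by simpa using h1
        rw [h1]
        rcases lt_or_gt_of_ne h2 with h3 | h3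
        · rw [if_pos (by linarith), if_neg (by linarith)]; simp
        · rw [if_neg (by linarith), if_pos (by linarith)]; simp
    intro e he i
    have := main e (Finset.ne_of_mem_erase he)
    cases i
    · exact this
    · rw [this, mul_comm]; rfl
  obtain ⟨φ, hφ, hφnz⟩ := Module.Dual.exists_forall_mem_ne_zero_of_forall_exists _ _ hex
  have hφ' : ∀ v, L v φ = 0 := fun v => by
    simpa using (Submodule.mem_iInf _).mp hφ v
  let N : ℕ := ∏ e, (φ e).den
  have hN : (N : ℚ) ≠ 0 := by
    have : N ≠ 0 := Finset.prod_ne_zero_iff.mpr (fun e _ => (φ e).den_ne_zero)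
    exact_mod_cast this
  have hint : ∀ e, ∃ z : ℤ, (z : ℚ) = N * φ e := by
    intro e
    obtain ⟨k, hk⟩ : (φ e).den ∣ N := Finset.dvd_prod_of_mem _ (Finset.mem_univ e)
    refine ⟨k * (φ e).num, ?_⟩
    rw [hk]
    push_cast
    have := Rat.den_mul_eq_num (φ e)
    rw [← this]; ring
  choose ψ hψ using hint
  refine ⟨O, ψ, ?_, ?_⟩
  · intro v
    have h := hφ' v
    rw [hL] at h
    have : ((∑ p ∈ univ.filter (fun p : E × Bool => G.ends p.1 p.2 = v),
      (if O.dir p.1 p.2 then ψ p.1 else -ψ p.1) : ℤ) : ℚ) = N * 0 := by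
      rw [← h, Finset.mul_sum]
      push_cast
      apply Finset.sum_congr rfl
      intro p _
      split <;> simp [hψ]
    rw [mul_zero] at this
    exact_mod_cast this
  · intro e he
    have := hψ e
    rw [he, Int.cast_zero] at this
    rcases mul_eq_zero.mp this.symm with h | h
    · exact hN h
    · exact hφnz e h

end SignedGraph

open SignedGraph Finset in
/-- A 2-edge-connected unbalanced signed graph is flow-admissible
if and only if it is not tightly unbalanced. -/
theorem stmt8 {V E : Type} [Fintype V] [Fintype E] [DecidableEq V]
    [DecidableEq E] (G : SignedGraph V E) (h2ec : G.TwoEdgeConnected)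
    (hunbal : ¬ G.Balanced) :
    G.FlowAdmissible ↔ ¬ G.TightlyUnbalanced := by
  exact ⟨fun h => admissible_imp G h, fun h => imp_admissible G h2ec hunbal h⟩
end
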